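/- Let K be an algebraically closed field of characteristic zero and let A = A(α,β,0) be a down-up algebra with β ≠ 0 and α + β ≠ 1. If t² − αt − β = (t − λ)(t − μ) with λ ≠ μ and λ/μ not a root of unity, then 2 ≤ sr(A) ≤ 3. -/

import Mathlib

noncomputable section

/-- Defining relations of the down-up algebra `A(α,β,γ)`:
`D = ι 0`, `U = ι 1`, relations `DU² = αUDU + βU²D + γU` and `D²U = αDUD + βUD² + γD`. -/
inductive DownUpRel (K : Type) [Field K] (a b g : K) :
    FreeAlgebra K (Fin 2) → FreeAlgebra K (Fin 2) → Prop
  | rel1 : DownUpRel K a b g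
      (FreeAlgebra.ι K (0 : Fin 2) * FreeAlgebra.ι K (1 : Fin 2) * FreeAlgebra.ι K (1 : Fin 2))
      (a • (FreeAlgebra.ι K (1 : Fin 2) * FreeAlgebra.ι K (0 : Fin 2) * FreeAlgebra.ι K (1 : Fin 2)) +
       b • (FreeAlgebra.ι K (1 : Fin 2) * FreeAlgebra.ι K (1 : Fin 2) * FreeAlgebra.ι K (0 : Fin 2)) +
       g • FreeAlgebra.ι K (1 : Fin 2))
  | rel2 : DownUpRel K a b g
      (FreeAlgebra.ι K (0 : Fin 2) * FreeAlgebra.ι K (0 : Fin 2) * FreeAlgebra.ι K (1 : Fin 2))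
      (a • (FreeAlgebra.ι K (0 : Fin 2) * FreeAlgebra.ι K (1 : Fin 2) * FreeAlgebra.ι K (0 : Fin 2)) +
       b • (FreeAlgebra.ι K (1 : Fin 2) * FreeAlgebra.ι K (0 : Fin 2) * FreeAlgebra.ι K (0 : Fin 2)) +
       g • FreeAlgebra.ι K (0 : Fin 2))

/-- The down-up algebra `A(α,β,γ)`. -/
abbrev DownUp (K : Type) [Field K] (a b g : K) := RingQuot (DownUpRel K a b g)

/-- The generator `D` of `A(α,β,γ)`. -/
def DownUp.D (K : Type) [Field K] (a b g : K) : DownUp K a b g :=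
  RingQuot.mkAlgHom K (DownUpRel K a b g) (FreeAlgebra.ι K (0 : Fin 2))

/-- The generator `U` of `A(α,β,γ)`. -/
def DownUp.U (K : Type) [Field K] (a b g : K) : DownUp K a b g :=
  RingQuot.mkAlgHom K (DownUpRel K a b g) (FreeAlgebra.ι K (1 : Fin 2))

/-- A row `(u₁,…,u_s)` over `R` is unimodular if `u₁R + ⋯ + u_sR = R`. -/
def IsUnimodularRow {R : Type} [Ring R] {s : ℕ} (u : Fin s → R) : Prop :=
  Submodule.span Rᵐᵒᵖ (Set.range u) = ⊤

/-- A unimodular row `(u₁,…,u_{s+1})` is stable if there exist `r₁,…,r_s` such that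
`(u₁ + u_{s+1}r₁, …, u_s + u_{s+1}r_s)` is unimodular. -/
def IsStableRow {R : Type} [Ring R] {s : ℕ} (u : Fin (s + 1) → R) : Prop :=
  ∃ r : Fin s → R,
    IsUnimodularRow (fun i : Fin s => u i.castSucc + u (Fin.last s) * r i)

/-- The stable rank of `R`: the least `t` such that every unimodular row of
length `t + 1` over `R` is stable. -/
noncomputable def stableRank (R : Type) [Ring R] : ℕ :=
  sInf {t : ℕ | ∀ u : Fin (t + 1) → R, IsUnimodularRow u → IsStableRow u}

/-!
Write `x = DU - lam UD` and `y = DU - μ UD`. Both are normal elements commuting with `D` and `U`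
up to scalars, and the monomials `Uⁱ xʲ Dᵏ` multiply like those of a polynomial ring in three
variables, up to nonzero scalars and terms of lower degree. Hence the Hilbert functions of
quotients by right ideals behave as over a polynomial ring, and give a dimension for which the
algebra `A` has dimension at most `3`.

Upper bound. Let `(a₁, a₂, a₃, e)` be unimodular modulo a right ideal `J`. As in Stafford's
theorem, one can choose `r₁, r₂, r₃` so that each `aᵢ + e rᵢ`, once adjoined to `J`, lowers the
dimension of the quotient by one: otherwise `aᵢ + e rᵢ` is changed so as to act nontrivially on a
critical submodule. For `J = zA` with `z = xy`, where `A ⧸ zA` has dimension at most `2`, this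
gives a row which is unimodular modulo `z`. For `J = 0`, and with `e z` in place of `e`, it then
gives a row which generates a right ideal of finite codimension and is still unimodular modulo
`z`. The quotient by this right ideal is a finite-dimensional module on which `x` and `y` are
invertible, and such a module vanishes because `S = x⁻¹y` commutes with `D` and `U` up to the
scalar `lam / μ`, which is not a root of unity.

Lower bound. The character `D ↦ X`, `U ↦ 0` to `K[X]` shows that `(D, D² - 1)` is not stable,
because `X + (X² - 1) r` is never constant.
-/

section WellQuasiOrder

variable {P : Type*} [PartialOrder P] [WellQuasiOrderedLE P]

theorem exists_finset_forall_exists_le (s : Set P) :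
    ∃ G : Finset P, ↑G ⊆ s ∧ ∀ v ∈ s, ∃ g ∈ G, g ≤ v := by
  have hfin : {v | Minimal (· ∈ s) v}.Finite :=
    WellQuasiOrderedLE.finite_of_isAntichain (setOfPred_minimal_antichain _)
  refine ⟨hfin.toFinset, fun g hg => (hfin.mem_toFinset.1 hg).prop, fun v hv => ?_⟩
  obtain ⟨g, hgv, hg⟩ := exists_minimal_le_of_wellFoundedLT (· ∈ s) v hv
  exact ⟨g, hfin.mem_toFinset.2 hg, hgv⟩

theorem exists_forall_ge_eq_of_isUpperSet {s : ℕ → Set P} (hs : Monotone s)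
    (hu : ∀ t, IsUpperSet (s t)) : ∃ t₀, ∀ t, t₀ ≤ t → s t = s t₀ := by
  obtain ⟨G, hG, hG'⟩ := exists_finset_forall_exists_le (⋃ t, s t)
  obtain ⟨t₀, ht₀⟩ := (hs.directed_le).exists_mem_subset_of_finset_subset_biUnion hG
  refine ⟨t₀, fun t ht => (hs ht).antisymm' fun v hv => ?_⟩
  obtain ⟨g, hg, hgv⟩ := hG' v (Set.mem_iUnion_of_mem t hv)
  exact hu t₀ hgv (ht₀ hg)

end WellQuasiOrder

section DegreeCount

variable {d : ℕ} {E E' : Set (Fin d →₀ ℕ)}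

/-- The counting function of a set of exponents: the number of `v ∈ E` of degree at most `n`. -/
def degreeCount (E : Set (Fin d →₀ ℕ)) (n : ℕ) : ℕ :=
  {v | v ∈ E ∧ v.degree ≤ n}.ncard

theorem finite_mem_and_degree_le (E : Set (Fin d →₀ ℕ)) (n : ℕ) :
    {v | v ∈ E ∧ v.degree ≤ n}.Finite :=
  (Finsupp.finite_of_degree_le n).subset fun _ hv => hv.2

theorem degreeCount_mono (h : E ⊆ E') {n n' : ℕ} (hn : n ≤ n') :
    degreeCount E n ≤ degreeCount E' n' :=
  Set.ncard_le_ncard (fun _ hv => ⟨h hv.1, hv.2.trans hn⟩) (finite_mem_and_degree_le E' n')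

theorem degree_cons (t : ℕ) (w : Fin d →₀ ℕ) : (Finsupp.cons t w).degree = t + w.degree := by
  simp [Finsupp.degree_eq_sum, Fin.sum_univ_succ]

theorem cons_le_cons {t t' : ℕ} {w w' : Fin d →₀ ℕ} (ht : t ≤ t') (hw : w ≤ w') :
    Finsupp.cons t w ≤ Finsupp.cons t' w' :=
  fun i => Fin.cases (by simpa) (fun j => by simpa using hw j) i

/-- The exponents in the last `d` variables which, together with exponent `t` in the first one,
lie in `E`. -/
def slice (E : Set (Fin (d + 1) →₀ ℕ)) (t : ℕ) : Set (Fin d →₀ ℕ) :=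
  Finsupp.cons t ⁻¹' E

theorem isUpperSet_slice {E : Set (Fin (d + 1) →₀ ℕ)} (hE : IsUpperSet E) (t : ℕ) :
    IsUpperSet (slice E t) :=
  fun _ _ h hv => hE (cons_le_cons le_rfl h) hv

theorem monotone_slice {E : Set (Fin (d + 1) →₀ ℕ)} (hE : IsUpperSet E) : Monotone (slice E) :=
  fun _ _ h _ hv => hE (cons_le_cons h le_rfl) hv

theorem exists_slice_eq {E : Set (Fin (d + 1) →₀ ℕ)} (hE : IsUpperSet E) :
    ∃ t₀, ∀ t, t₀ ≤ t → slice E t = slice E t₀ :=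
  exists_forall_ge_eq_of_isUpperSet (monotone_slice hE) (isUpperSet_slice hE)

theorem degreeCount_eq_sum_slice (E : Set (Fin (d + 1) →₀ ℕ)) (n : ℕ) :
    degreeCount E n = ∑ t ∈ Finset.range (n + 1), degreeCount (slice E t) (n - t) := by
  have hS := finite_mem_and_degree_le E n
  have hmaps : ∀ v ∈ hS.toFinset, v 0 ∈ Finset.range (n + 1) := fun v hv =>
    Finset.mem_range_succ_iff.2 ((Finsupp.le_degree 0 v).trans (hS.mem_toFinset.1 hv).2)
  rw [degreeCount, Set.ncard_eq_toFinset_card _ hS, Finset.card_eq_sum_card_fiberwise hmaps]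
  refine Finset.sum_congr rfl fun t ht => ?_
  have hfiber : {v ∈ hS.toFinset | v 0 = t} =
      (finite_mem_and_degree_le (slice E t) (n - t)).toFinset.map
        ⟨Finsupp.cons t, Finsupp.cons_right_injective t⟩ := by
    ext v
    have htn : t ≤ n := Finset.mem_range_succ_iff.1 ht
    simp only [Finset.mem_filter, Set.Finite.mem_toFinset, Finset.mem_map, Set.mem_ofPred_eq,
      Function.Embedding.coeFn_mk]
    constructor
    · rintro ⟨⟨hv, hdeg⟩, rfl⟩
      refine ⟨v.tail, ⟨by simpa [slice] using hv, ?_⟩, v.cons_tail⟩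
      have := degree_cons (v 0) v.tail
      rw [v.cons_tail] at this
      omega
    · rintro ⟨w, ⟨hw, hdeg⟩, rfl⟩
      exact ⟨⟨hw, by rw [degree_cons]; omega⟩, Finsupp.cons_zero t w⟩
  rw [hfiber, Finset.card_map, degreeCount,
    Set.ncard_eq_toFinset_card _ (finite_mem_and_degree_le _ _)]

theorem degreeCount_slice_le (E : Set (Fin (d + 1) →₀ ℕ)) {t n : ℕ} (h : t ≤ n) :
    degreeCount (slice E t) (n - t) ≤ degreeCount E n := by
  rw [degreeCount_eq_sum_slice]
  exact Finset.single_le_sum (f := fun t => degreeCount (slice E t) (n - t))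
    (fun _ _ => Nat.zero_le _) (Finset.mem_range_succ_iff.2 h)

theorem degreeCount_le (E : Set (Fin d →₀ ℕ)) (n : ℕ) : degreeCount E n ≤ (n + 1) ^ d := by
  induction d generalizing n with
  | zero => exact (Set.ncard_le_one_of_subsingleton _).trans (by simp)
  | succ d ih =>
    calc degreeCount E n = ∑ t ∈ Finset.range (n + 1), degreeCount (slice E t) (n - t) :=
          degreeCount_eq_sum_slice E n
      _ ≤ ∑ _t ∈ Finset.range (n + 1), (n + 1) ^ d :=
          Finset.sum_le_sum fun t _ => (ih _ _).trans (by gcongr; omega)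
      _ = (n + 1) ^ (d + 1) := by simp [pow_succ']

end DegreeCount

section Growth

/-- The comparison function for growth of degree less than `b`: it is `n ↦ (n + 1) ^ (b - 1)` for
`b > 0`, and `0` for `b = 0`. -/
def growth : ℕ → ℕ → ℕ
  | 0, _ => 0
  | b + 1, n => (n + 1) ^ b

@[simp] theorem growth_zero (n : ℕ) : growth 0 n = 0 := rfl

@[simp] theorem growth_succ (b n : ℕ) : growth (b + 1) n = (n + 1) ^ b := rfl

theorem monotone_growth (b : ℕ) : Monotone (growth b) := by
  intro n n' h
  cases b
  · simp
  · simp only [growth_succ]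
    gcongr

theorem growth_add_le (b n k : ℕ) : growth b (n + k) ≤ (k + 1) ^ (b - 1) * growth b n := by
  cases b with
  | zero => simp
  | succ b =>
    rw [growth_succ, growth_succ, Nat.add_sub_cancel, ← mul_pow]
    gcongr
    nlinarith [Nat.zero_le (k * n)]

theorem succ_mul_growth_le (b n : ℕ) : (n + 1) * growth b n ≤ growth (b + 1) n := by
  cases b with
  | zero => simp
  | succ b => simp [pow_succ']

variable {d : ℕ}

/-- The counting function of `E` is bounded by a polynomial of degree less than `b`. -/
def GrowthLT (b : ℕ) (E : Set (Fin d →₀ ℕ)) : Prop :=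
  ∃ C, ∀ n, degreeCount E n ≤ C * growth b n

/-- The counting function of `E` grows at least like a polynomial of degree `b`. The rate `d` is
part of the definition: what matters later is that it does not depend on `E`. -/
def GrowthGE (b : ℕ) (E : Set (Fin d →₀ ℕ)) : Prop :=
  ∃ a, ∀ n k, d * n + a ≤ k → (n + 1) ^ b ≤ degreeCount E k

theorem growthLT_zero_or_growthGE_zero (E : Set (Fin d →₀ ℕ)) : GrowthLT 0 E ∨ GrowthGE 0 E := by
  obtain rfl | ⟨v, hv⟩ := E.eq_empty_or_nonempty
  · exact .inl ⟨0, fun n => by simp [degreeCount]⟩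
  · refine .inr ⟨v.degree, fun n k h => ?_⟩
    rw [pow_zero, Nat.one_le_iff_ne_zero]
    exact Set.ncard_ne_zero_of_mem (a := v) ⟨hv, by omega⟩ (finite_mem_and_degree_le E k)

theorem growthLT_succ_of_dim_zero (b : ℕ) (E : Set (Fin 0 →₀ ℕ)) : GrowthLT (b + 1) E :=
  ⟨1, fun n => (Set.ncard_le_one_of_subsingleton _).trans (by simp [Nat.one_le_pow])⟩

theorem GrowthGE.of_slice {b : ℕ} {E : Set (Fin (d + 1) →₀ ℕ)} {t : ℕ}
    (h : GrowthGE b (slice E t)) : GrowthGE b E := by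
  obtain ⟨a, ha⟩ := h
  refine ⟨a + t, fun n k hk => ?_⟩
  have : (d + 1) * n = d * n + n := by ring
  exact (ha n (k - t) (by omega)).trans (degreeCount_slice_le E (by omega))

theorem GrowthGE.succ_of_eventually_slice_eq {b : ℕ} {E : Set (Fin (d + 1) →₀ ℕ)}
    {F : Set (Fin d →₀ ℕ)} {t₀ : ℕ} (hE : ∀ t, t₀ ≤ t → slice E t = F) (h : GrowthGE b F) :
    GrowthGE (b + 1) E := by
  obtain ⟨a, ha⟩ := h
  refine ⟨a + t₀, fun n k hk => ?_⟩
  have hmul : (d + 1) * n = d * n + n := by ring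
  calc (n + 1) ^ (b + 1) = ∑ _t ∈ Finset.Icc t₀ (t₀ + n), (n + 1) ^ b := by
        rw [Finset.sum_const, Nat.card_Icc, smul_eq_mul, pow_succ']
        congr 1
        omega
    _ ≤ ∑ t ∈ Finset.Icc t₀ (t₀ + n), degreeCount (slice E t) (k - t) :=
        Finset.sum_le_sum fun t ht => by
          obtain ⟨h₀, h₁⟩ := Finset.mem_Icc.1 ht
          rw [hE t h₀]
          exact ha n (k - t) (by omega)
    _ ≤ ∑ t ∈ Finset.range (k + 1), degreeCount (slice E t) (k - t) :=
        Finset.sum_le_sum_of_subset fun t ht => by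
          obtain ⟨-, h₁⟩ := Finset.mem_Icc.1 ht
          exact Finset.mem_range.2 (by omega)
    _ = degreeCount E k := (degreeCount_eq_sum_slice E k).symm

theorem GrowthLT.succ_of_eventually_slice_eq {b : ℕ} {E : Set (Fin (d + 1) →₀ ℕ)}
    {F : Set (Fin d →₀ ℕ)} {t₀ : ℕ} (hE : ∀ t, t₀ ≤ t → slice E t = F) (h : GrowthLT b F)
    (hsmall : ∀ t, GrowthLT (b + 1) (slice E t)) : GrowthLT (b + 1) E := by
  obtain ⟨C, hC⟩ := h
  choose c hc using hsmall
  refine ⟨∑ t ∈ Finset.range t₀, c t + C, fun n => ?_⟩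
  have hslice : ∀ t, degreeCount (slice E t) (n - t) ≤
      (if t ∈ Finset.range t₀ then c t * growth (b + 1) n else 0) + C * growth b n := by
    intro t
    refine (degreeCount_mono subset_rfl (Nat.sub_le n t)).trans ?_
    split_ifs with ht
    · exact (hc t n).trans (Nat.le_add_right _ _)
    · rw [hE t (by simpa using ht), zero_add]
      exact hC n
  calc degreeCount E n = ∑ t ∈ Finset.range (n + 1), degreeCount (slice E t) (n - t) :=
        degreeCount_eq_sum_slice E n
    _ ≤ ∑ t ∈ Finset.range (n + 1),
          ((if t ∈ Finset.range t₀ then c t * growth (b + 1) n else 0) + C * growth b n) :=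
        Finset.sum_le_sum fun t _ => hslice t
    _ ≤ ∑ t ∈ Finset.range t₀, c t * growth (b + 1) n + C * ((n + 1) * growth b n) := by
        rw [Finset.sum_add_distrib, ← Finset.sum_filter, Finset.sum_const, Finset.card_range,
          smul_eq_mul, mul_left_comm C]
        gcongr
        exact fun t ht => (Finset.mem_filter.1 ht).2
    _ ≤ (∑ t ∈ Finset.range t₀, c t + C) * growth (b + 1) n := by
        rw [add_mul (Finset.sum _ _), Finset.sum_mul]
        gcongr
        exact succ_mul_growth_le b n

theorem growthLT_or_growthGE (b : ℕ) {I I' : Set (Fin d →₀ ℕ)} (hI : IsUpperSet I)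
    (hI' : IsUpperSet I') : GrowthLT b (I' \ I) ∨ GrowthGE b (I' \ I) := by
  induction d generalizing b with
  | zero =>
    cases b with
    | zero => exact growthLT_zero_or_growthGE_zero _
    | succ b => exact .inl (growthLT_succ_of_dim_zero b _)
  | succ d ih =>
    cases b with
    | zero => exact growthLT_zero_or_growthGE_zero _
    | succ b =>
      obtain ⟨t₁, ht₁⟩ := exists_slice_eq hI
      obtain ⟨t₂, ht₂⟩ := exists_slice_eq hI'
      have hslice : ∀ t, max t₁ t₂ ≤ t → slice (I' \ I) t = slice I' t₂ \ slice I t₁ := by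
        intro t ht
        rw [← ht₁ t (le_of_max_le_left ht), ← ht₂ t (le_of_max_le_right ht)]
        rfl
      rcases ih b (isUpperSet_slice hI t₁) (isUpperSet_slice hI' t₂) with hsmall | hlarge
      · by_cases h : ∃ t, GrowthGE (b + 1) (slice (I' \ I) t)
        · exact .inr h.choose_spec.of_slice
        · exact .inl <| hsmall.succ_of_eventually_slice_eq hslice fun t =>
            (ih (b + 1) (isUpperSet_slice hI t) (isUpperSet_slice hI' t)).resolve_right
              (not_exists.1 h t)
      · exact .inr (hlarge.succ_of_eventually_slice_eq hslice)

theorem growthLT_compl_of_isUpperSet {I : Set (Fin d →₀ ℕ)} (hI : IsUpperSet I)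
    (hne : I.Nonempty) : GrowthLT d Iᶜ := by
  induction d with
  | zero =>
    rw [Subsingleton.eq_univ_of_nonempty hne]
    exact ⟨0, fun n => by simp [degreeCount]⟩
  | succ d ih =>
    obtain ⟨v, hv⟩ := hne
    obtain ⟨t₀, ht₀⟩ := exists_slice_eq hI
    have hmem : v.tail ∈ slice I (v 0) := by simpa [slice] using hv
    have hne₀ : (slice I t₀).Nonempty := by
      refine ⟨v.tail, ?_⟩
      rw [← ht₀ _ (le_max_right (v 0) t₀)]
      exact monotone_slice hI (le_max_left _ _) hmem
    have hslice : ∀ t, t₀ ≤ t → slice Iᶜ t = (slice I t₀)ᶜ := fun t ht => by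
      rw [← ht₀ t ht]
      rfl
    exact (ih (isUpperSet_slice hI t₀) hne₀).succ_of_eventually_slice_eq hslice fun t =>
      ⟨1, fun n => by simpa using degreeCount_le (slice Iᶜ t) n⟩

end Growth

section IsLeading

variable {d : ℕ} (K : Type*) {R : Type*} [Field K] [Ring R] [Algebra K R] (mon : (Fin d →₀ ℕ) → R)

/-- The span of the monomials `mon u` with `u` of degree less than `n`. -/
def spanDegreeLT (n : ℕ) : Submodule K R :=
  Submodule.span K (mon '' {u | u.degree < n})

/-- `x` is a nonzero scalar multiple of the monomial `mon v`, up to monomials of lower degree. -/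
def IsLeading (v : Fin d →₀ ℕ) (x : R) : Prop :=
  ∃ c : K, c ≠ 0 ∧ x - c • mon v ∈ spanDegreeLT K mon v.degree

variable {K mon}

theorem spanDegreeLT_mono {m n : ℕ} (h : m ≤ n) : spanDegreeLT K mon m ≤ spanDegreeLT K mon n :=
  Submodule.span_mono <| Set.image_mono fun _ hu => lt_of_lt_of_le hu h

theorem mon_mem_spanDegreeLT {v : Fin d →₀ ℕ} {n : ℕ} (h : v.degree < n) :
    mon v ∈ spanDegreeLT K mon n :=
  Submodule.subset_span ⟨v, h, rfl⟩

theorem isLeading_mon (v : Fin d →₀ ℕ) : IsLeading K mon v (mon v) :=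
  ⟨1, one_ne_zero, by simp⟩

theorem IsLeading.mem {v : Fin d →₀ ℕ} {x : R} (h : IsLeading K mon v x) {n : ℕ}
    (hn : v.degree < n) : x ∈ spanDegreeLT K mon n := by
  obtain ⟨c, -, h⟩ := h
  exact (Submodule.sub_mem_iff_left _ (Submodule.smul_mem _ c (mon_mem_spanDegreeLT hn))).1
    (spanDegreeLT_mono hn.le h)

theorem IsLeading.smul {v : Fin d →₀ ℕ} {x : R} (h : IsLeading K mon v x) {a : K} (ha : a ≠ 0) :
    IsLeading K mon v (a • x) := by
  obtain ⟨c, hc, h⟩ := h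
  refine ⟨a * c, mul_ne_zero ha hc, ?_⟩
  rw [mul_smul, ← smul_sub]
  exact Submodule.smul_mem _ a h

theorem IsLeading.add {v : Fin d →₀ ℕ} {x y : R} (h : IsLeading K mon v x)
    (hy : y ∈ spanDegreeLT K mon v.degree) : IsLeading K mon v (x + y) := by
  obtain ⟨c, hc, h⟩ := h
  refine ⟨c, hc, ?_⟩
  rw [add_sub_right_comm]
  exact add_mem h hy

theorem IsLeading.map {v w : Fin d →₀ ℕ} {x : R} (h : IsLeading K mon v x) (φ : R →ₗ[K] R)
    (hlead : IsLeading K mon w (φ (mon v)))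
    (hlow : spanDegreeLT K mon v.degree ≤ (spanDegreeLT K mon w.degree).comap φ) :
    IsLeading K mon w (φ x) := by
  obtain ⟨c, hc, h⟩ := h
  have := (hlead.smul hc).add (hlow h)
  rwa [← map_smul, ← map_add, add_sub_cancel] at this

theorem spanDegreeLT_le_comap {m n : ℕ} (φ : R →ₗ[K] R)
    (h : ∀ v : Fin d →₀ ℕ, v.degree < m → φ (mon v) ∈ spanDegreeLT K mon n) :
    spanDegreeLT K mon m ≤ (spanDegreeLT K mon n).comap φ :=
  Submodule.span_le.2 <| Set.image_subset_iff.2 h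

theorem isLeading_mon_mul_mon {gen : Fin d → R} (mon_zero : mon 0 = 1)
    (mon_mul_gen : ∀ v i, IsLeading K mon (v + Finsupp.single i 1) (mon v * gen i))
    (v w : Fin d →₀ ℕ) : IsLeading K mon (v + w) (mon v * mon w) := by
  induction hN : w.degree using Nat.strong_induction_on generalizing v w with
  | _ N ih =>
  subst hN
  obtain rfl | ⟨i, hi⟩ := (eq_or_ne w 0).imp_right Finsupp.ne_iff.1
  · simpa [mon_zero] using isLeading_mon v
  obtain ⟨u, rfl⟩ : ∃ u, w = u + Finsupp.single i 1 :=
    ⟨w - Finsupp.single i 1, (tsub_add_cancel_of_le <| by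
      simpa [Finsupp.single_le_iff, Nat.one_le_iff_ne_zero] using hi).symm⟩
  have hdeg : ∀ a : Fin d →₀ ℕ, (a + Finsupp.single i 1).degree = a.degree + 1 := by simp
  rw [hdeg] at ih
  have hmain : IsLeading K mon (v + (u + Finsupp.single i 1)) (mon v * mon u * gen i) := by
    rw [← add_assoc]
    refine (ih _ (Nat.lt_succ_self _) v u rfl).map (LinearMap.mulRight K (gen i))
      (mon_mul_gen _ i) (spanDegreeLT_le_comap _ fun a ha => (mon_mul_gen a i).mem ?_)
    simpa [hdeg] using ha
  have hlow : spanDegreeLT K mon (u + Finsupp.single i 1).degree ≤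
      (spanDegreeLT K mon (v + (u + Finsupp.single i 1)).degree).comap
        (LinearMap.mulLeft K (mon v)) :=
    spanDegreeLT_le_comap _ fun a ha => (ih _ (by rwa [hdeg] at ha) v a rfl).mem (by
      simpa using ha)
  obtain ⟨c, hc, h⟩ := mon_mul_gen u i
  have hw : mon v * mon (u + Finsupp.single i 1) = c⁻¹ • (mon v * mon u * gen i) +
      mon v * (-c⁻¹ • (mon u * gen i - c • mon (u + Finsupp.single i 1))) := by
    rw [neg_smul, smul_sub, inv_smul_smul₀ hc, mul_neg, mul_sub, mul_smul_comm, mul_assoc]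
    abel
  rw [hw]
  exact (hmain.smul (inv_ne_zero hc)).add (hlow (Submodule.smul_mem _ _ h))

theorem span_range_mon_eq_top {gen : Fin d → R} (mon_zero : mon 0 = 1)
    (mon_mul_gen : ∀ v i, IsLeading K mon (v + Finsupp.single i 1) (mon v * gen i))
    (adjoin_gen : Algebra.adjoin K (Set.range gen) = ⊤) :
    Submodule.span K (Set.range mon) = ⊤ := by
  set L := Submodule.span K (Set.range mon)
  have hle : ∀ n, spanDegreeLT K mon n ≤ L := fun n =>
    Submodule.span_mono (Set.image_subset_range _ _)
  have hgen : ∀ i, L ≤ L.comap (LinearMap.mulRight K (gen i)) := fun i =>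
    Submodule.span_le.2 <| Set.range_subset_iff.2 fun v =>
      hle _ ((mon_mul_gen v i).mem (Nat.lt_succ_self _))
  have hmul : ∀ a : R, ∀ x ∈ L, x * a ∈ L := by
    intro a
    have ha : a ∈ Algebra.adjoin K (Set.range gen) := adjoin_gen ▸ Algebra.mem_top
    induction ha using Algebra.adjoin_induction with
    | mem a ha =>
      obtain ⟨i, rfl⟩ := ha
      exact hgen i
    | algebraMap r =>
      intro x hx
      rw [← Algebra.commutes, ← Algebra.smul_def]
      exact L.smul_mem r hx
    | add a b _ _ ha hb => exact fun x hx => mul_add x a b ▸ add_mem (ha x hx) (hb x hx)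
    | mul a b _ _ ha hb => exact fun x hx => mul_assoc x a b ▸ hb _ (ha x hx)
  have hone : (1 : R) ∈ L := mon_zero ▸ Submodule.subset_span (Set.mem_range_self 0)
  exact eq_top_iff.2 fun a _ => by simpa using hmul a 1 hone

end IsLeading

/-- A system of monomials indexed by exponents in `d` variables which spans `R` and whose products
are, up to nonzero scalars and lower degree terms, those of a polynomial ring (as in a
Poincaré–Birkhoff–Witt basis). The monomials are not required to be linearly independent. -/
structure PBWSystem (d : ℕ) (K R : Type*) [Field K] [Ring R] [Algebra K R] where
  mon : (Fin d →₀ ℕ) → R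
  mon_mul_mon : ∀ v w, IsLeading K mon (v + w) (mon v * mon w)
  span_range_mon : Submodule.span K (Set.range mon) = ⊤

namespace PBWSystem

open scoped MonomialOrder
open MonomialOrder (degLex)

variable {d : ℕ} {K R : Type*} [Field K] [Ring R] [Algebra K R] (P : PBWSystem d K R)

/-- The span of the monomials with exponents in `S`. -/
def monSpan (S : Set (Fin d →₀ ℕ)) : Submodule K R :=
  Submodule.span K (P.mon '' S)

/-- The filtration of `R` by degree. -/
def filt (n : ℕ) : Submodule K R :=
  P.monSpan {u | u.degree ≤ n}

/-- The span of the monomials which are smaller than `mon w` in the graded lexicographic order. -/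
def below (w : Fin d →₀ ℕ) : Submodule K R :=
  P.monSpan {u | u ≺[degLex] w}

variable {P}

theorem degree_le_of_degLex_lt {v w : Fin d →₀ ℕ} (h : v ≺[degLex] w) : v.degree ≤ w.degree :=
  Finsupp.DegLex.monotone_degree (MonomialOrder.degLex_lt_iff.1 h).le

theorem degLex_lt_of_degree_lt {v w : Fin d →₀ ℕ} (h : v.degree < w.degree) : v ≺[degLex] w :=
  MonomialOrder.degLex_lt_iff.2 (Finsupp.DegLex.lt_iff.2 (.inl h))

theorem mon_mem_monSpan {S : Set (Fin d →₀ ℕ)} {v : Fin d →₀ ℕ} (h : v ∈ S) :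
    P.mon v ∈ P.monSpan S :=
  Submodule.subset_span ⟨v, h, rfl⟩

theorem monSpan_mono {S T : Set (Fin d →₀ ℕ)} (h : S ⊆ T) : P.monSpan S ≤ P.monSpan T :=
  Submodule.span_mono (Set.image_mono h)

theorem monSpan_le {S : Set (Fin d →₀ ℕ)} {Q : Submodule K R} :
    P.monSpan S ≤ Q ↔ ∀ v ∈ S, P.mon v ∈ Q :=
  Submodule.span_le.trans Set.image_subset_iff

theorem filt_mono : Monotone P.filt :=
  fun _ _ h => monSpan_mono fun _ hu => le_trans hu h

instance (n : ℕ) : FiniteDimensional K (P.filt n) :=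
  FiniteDimensional.span_of_finite K ((Finsupp.finite_of_degree_le n).image _)

theorem spanDegreeLT_le_below {w : Fin d →₀ ℕ} {n : ℕ} (h : n ≤ w.degree) :
    spanDegreeLT K P.mon n ≤ P.below w :=
  monSpan_mono fun _ hu => degLex_lt_of_degree_lt (lt_of_lt_of_le hu h)

variable (P) in
theorem exists_mem_filt (x : R) : ∃ n, x ∈ P.filt n := by
  have hx : x ∈ Submodule.span K (Set.range P.mon) := P.span_range_mon ▸ Submodule.mem_top
  induction hx using Submodule.span_induction with
  | mem x hx =>
    obtain ⟨v, rfl⟩ := hx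
    exact ⟨v.degree, mon_mem_monSpan (le_refl v.degree)⟩
  | zero => exact ⟨0, zero_mem _⟩
  | add x y _ _ hx hy =>
    obtain ⟨⟨m, hm⟩, n, hn⟩ := And.intro hx hy
    exact ⟨max m n, add_mem (filt_mono (le_max_left m n) hm) (filt_mono (le_max_right m n) hn)⟩
  | smul a x _ hx =>
    obtain ⟨n, hn⟩ := hx
    exact ⟨n, Submodule.smul_mem _ a hn⟩

theorem mul_mem_filt {m n : ℕ} {x y : R} (hx : x ∈ P.filt m) (hy : y ∈ P.filt n) :
    x * y ∈ P.filt (m + n) := by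
  have hmon : ∀ v ∈ {v : Fin d →₀ ℕ | v.degree ≤ m}, ∀ w ∈ {w : Fin d →₀ ℕ | w.degree ≤ n},
      P.mon v * P.mon w ∈ P.filt (m + n) := fun v hv w hw => by
    have hdeg : (v + w).degree ≤ m + n := by
      rw [map_add]
      exact add_le_add hv hw
    have := (P.mon_mul_mon v w).mem (Nat.lt_succ_self _)
    exact monSpan_mono (fun u hu => (Nat.lt_succ_iff.1 hu).trans hdeg) this
  have hright : ∀ v ∈ {v : Fin d →₀ ℕ | v.degree ≤ m}, P.mon v * y ∈ P.filt (m + n) := fun v hv =>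
    (monSpan_le (Q := (P.filt (m + n)).comap (LinearMap.mulLeft K (P.mon v)))).2 (hmon v hv) hy
  exact (monSpan_le (Q := (P.filt (m + n)).comap (LinearMap.mulRight K y))).2 hright hx

theorem mul_mon_mem_below {v : Fin d →₀ ℕ} {x : R} (hx : x ∈ P.below v) (w : Fin d →₀ ℕ) :
    x * P.mon w ∈ P.below (v + w) := by
  have hmon : ∀ u, u ≺[degLex] v → P.mon u * P.mon w ∈ P.below (v + w) := fun u hu => by
    obtain ⟨c, -, hc⟩ := P.mon_mul_mon u w
    have hlt : u + w ≺[degLex] v + w := by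
      rw [map_add, map_add]
      exact add_lt_add_left hu _
    have hmem : P.mon (u + w) ∈ P.below (v + w) := mon_mem_monSpan hlt
    exact (Submodule.sub_mem_iff_left _ (Submodule.smul_mem _ c hmem)).1
      (spanDegreeLT_le_below (degree_le_of_degLex_lt hlt) hc)
  have hle : P.below v ≤ (P.below (v + w)).comap (LinearMap.mulRight K (P.mon w)) :=
    monSpan_le.2 hmon
  exact hle hx

theorem exists_leading {S : Set (Fin d →₀ ℕ)} {x : R} (hx : x ∈ P.monSpan S) (hx0 : x ≠ 0) :
    ∃ v ∈ S, ∃ a : K, a ≠ 0 ∧ x - a • P.mon v ∈ P.below v := by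
  obtain ⟨l, hl, rfl⟩ := (Finsupp.mem_span_image_iff_linearCombination K).1 hx
  have hl0 : l.support.Nonempty := Finsupp.support_nonempty_iff.2 fun h => hx0 (by simp [h])
  obtain ⟨v, hv, hmax⟩ := l.support.exists_max_image degLex.toSyn hl0
  refine ⟨v, hl hv, l v, Finsupp.mem_support_iff.1 hv, ?_⟩
  rw [Finsupp.linearCombination_apply, Finsupp.sum, ← Finset.add_sum_erase _ _ hv,
    add_sub_cancel_left]
  refine sum_mem fun u hu => Submodule.smul_mem _ _ (mon_mem_monSpan ?_)
  obtain ⟨hne, hu⟩ := Finset.mem_erase.1 hu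
  exact (hmax u hu).lt_of_ne (degLex.toSyn.injective.ne hne)

variable (P) in
/-- The leading exponents of the elements of `L`, with respect to the graded lexicographic order. -/
def ini (L : Set R) : Set (Fin d →₀ ℕ) :=
  {v | ∃ f ∈ L, f - P.mon v ∈ P.below v}

theorem ini_mono {L L' : Set R} (h : L ⊆ L') : P.ini L ⊆ P.ini L' :=
  fun _ ⟨f, hf, hv⟩ => ⟨f, h hf, hv⟩

theorem mem_ini_of_sub_smul_mem {L : Submodule K R} {x : R} (hx : x ∈ L) {a : K} (ha : a ≠ 0)
    {v : Fin d →₀ ℕ} (h : x - a • P.mon v ∈ P.below v) : v ∈ P.ini L := by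
  refine ⟨a⁻¹ • x, L.smul_mem _ hx, ?_⟩
  have := (P.below v).smul_mem a⁻¹ h
  rwa [smul_sub, inv_smul_smul₀ ha] at this

theorem exists_mul_mon_sub_smul_mem_below {f : R} {v : Fin d →₀ ℕ} (h : f - P.mon v ∈ P.below v)
    (w : Fin d →₀ ℕ) :
    ∃ c : K, c ≠ 0 ∧ f * P.mon w - c • P.mon (v + w) ∈ P.below (v + w) := by
  obtain ⟨c, hc, hvw⟩ := P.mon_mul_mon v w
  refine ⟨c, hc, ?_⟩
  have := add_mem (mul_mon_mem_below h w) (spanDegreeLT_le_below le_rfl hvw)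
  rwa [sub_mul, sub_add_sub_cancel] at this

theorem isUpperSet_ini {L : Submodule K R} (hL : ∀ x ∈ L, ∀ r, x * r ∈ L) :
    IsUpperSet (P.ini (L : Set R)) := by
  rintro v w hvw ⟨f, hf, hv⟩
  obtain ⟨c, hc, h⟩ := exists_mul_mon_sub_smul_mem_below hv (w - v)
  rw [add_tsub_cancel_of_le hvw] at h
  exact mem_ini_of_sub_smul_mem (hL f hf _) hc h

theorem inf_monSpan_le_of_ini {S : Set (Fin d →₀ ℕ)} (hS : ∀ v ∈ S, ∀ u, u ≺[degLex] v → u ∈ S)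
    {L Q : Submodule K R} (h : ∀ v ∈ P.ini L, v ∈ S → v ∈ P.ini ↑(L ⊓ Q)) :
    L ⊓ P.monSpan S ≤ Q := by
  have wf : WellFounded fun u v : Fin d →₀ ℕ => u ≺[degLex] v := InvImage.wf _ wellFounded_lt
  have hind : ∀ v ∈ S, ∀ x ∈ L, ∀ a : K, a ≠ 0 → x - a • P.mon v ∈ P.below v → x ∈ Q := by
    intro v
    induction v using wf.induction with
    | _ v ih =>
    intro hv x hx a ha hxa
    obtain ⟨f, ⟨hfL, hfQ⟩, hf⟩ := h v (mem_ini_of_sub_smul_mem hx ha hxa) hv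
    have hy : x - a • f ∈ P.below v := by
      have := sub_mem hxa (Submodule.smul_mem _ a hf)
      rwa [smul_sub, sub_sub_sub_cancel_right] at this
    refine (Submodule.sub_mem_iff_left _ (Submodule.smul_mem Q a hfQ)).1 ?_
    obtain hy0 | hy0 := eq_or_ne (x - a • f) 0
    · exact hy0 ▸ zero_mem Q
    · obtain ⟨w, hw, b, hb, hwb⟩ := exists_leading hy hy0
      exact ih w hw (hS v hv w hw) _ (sub_mem hx (Submodule.smul_mem _ a hfL)) b hb hwb
  rintro x ⟨hxL, hxS⟩
  obtain rfl | hx0 := eq_or_ne x 0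
  · exact zero_mem Q
  · obtain ⟨v, hv, a, ha, hva⟩ := exists_leading hxS hx0
    exact hind v hv x hxL a ha hva

theorem inf_filt_le_of_ini {n : ℕ} {L Q : Submodule K R}
    (h : ∀ v ∈ P.ini L, v.degree ≤ n → v ∈ P.ini ↑(L ⊓ Q)) : L ⊓ P.filt n ≤ Q :=
  inf_monSpan_le_of_ini (fun _ hv _ hu => (degree_le_of_degLex_lt hu).trans hv) h

variable (P) in
theorem exists_finset_inf_filt_le_sup_mulLeft {L : Submodule K R} (hL : ∀ x ∈ L, ∀ r, x * r ∈ L) :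
    ∃ s : Finset R, (s : Set R) ⊆ L ∧
      ∀ n, L ⊓ P.filt n ≤ s.sup fun g => (P.filt n).map (LinearMap.mulLeft K g) := by
  classical
  obtain ⟨G, hG, hle⟩ := exists_finset_forall_exists_le (P.ini (L : Set R))
  choose! f hfL hf using fun v (hv : v ∈ G) => hG hv
  refine ⟨G.image f, by simpa [Set.subset_def] using hfL, fun n => ?_⟩
  refine inf_filt_le_of_ini fun w hw hwn => ?_
  obtain ⟨v, hv, hvw⟩ := hle w hw
  obtain ⟨c, hc, h⟩ := exists_mul_mon_sub_smul_mem_below (hf v hv) (w - v)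
  rw [add_tsub_cancel_of_le hvw] at h
  refine mem_ini_of_sub_smul_mem (Submodule.mem_inf.2 ⟨hL _ (hfL v hv) _, ?_⟩) hc h
  have hdeg : (w - v).degree ≤ n := (Finsupp.degree_mono tsub_le_self).trans hwn
  exact Finset.le_sup (f := fun g => (P.filt n).map (LinearMap.mulLeft K g))
    (Finset.mem_image_of_mem f hv) ⟨_, mon_mem_monSpan hdeg, rfl⟩

section Opposite

open MulOpposite

theorem span_image_op (mon : (Fin d →₀ ℕ) → R) (S : Set (Fin d →₀ ℕ)) :
    Submodule.span K ((fun v => op (mon v)) '' S) =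
      (Submodule.span K (mon '' S)).map (opLinearEquiv K : R ≃ₗ[K] Rᵐᵒᵖ).toLinearMap := by
  rw [Submodule.map_span, ← Set.image_comp]
  rfl

variable (P) in
/-- The same monomials, viewed in the opposite algebra. -/
protected def op : PBWSystem d K Rᵐᵒᵖ where
  mon v := op (P.mon v)
  mon_mul_mon v w := by
    obtain ⟨c, hc, h⟩ := P.mon_mul_mon w v
    rw [add_comm] at h
    refine ⟨c, hc, ?_⟩
    rw [spanDegreeLT, span_image_op]
    exact ⟨_, h, rfl⟩
  span_range_mon := by
    rw [← Set.image_univ, span_image_op, Set.image_univ, P.span_range_mon, Submodule.map_top]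
    exact (opLinearEquiv K : R ≃ₗ[K] Rᵐᵒᵖ).range

theorem op_mem_op_filt {n : ℕ} {x : R} : op x ∈ P.op.filt n ↔ x ∈ P.filt n := by
  have : P.op.filt n = (P.filt n).map (opLinearEquiv K : R ≃ₗ[K] Rᵐᵒᵖ).toLinearMap :=
    span_image_op P.mon _
  rw [this]
  exact Submodule.mem_map_equiv _

variable (P) in
theorem exists_finset_inf_filt_le_sup_mulRight {L : Submodule K R}
    (hL : ∀ x ∈ L, ∀ r, r * x ∈ L) :
    ∃ s : Finset R, (s : Set R) ⊆ L ∧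
      ∀ n, L ⊓ P.filt n ≤ s.sup fun g => (P.filt n).map (LinearMap.mulRight K g) := by
  classical
  let e := (opLinearEquiv K : R ≃ₗ[K] Rᵐᵒᵖ)
  obtain ⟨s, hs, h⟩ := P.op.exists_finset_inf_filt_le_sup_mulLeft
    (L := L.comap e.symm.toLinearMap) fun x hx r => hL _ hx _
  refine ⟨s.image unop, by simpa [Set.subset_def, e] using hs, fun n x hx => ?_⟩
  have hop := h n (show op x ∈ _ from ⟨hx.1, op_mem_op_filt.2 hx.2⟩)
  rw [Finset.sup_image]
  have hle : (s.sup fun g => (P.op.filt n).map (LinearMap.mulLeft K g)) ≤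
      (s.sup ((fun g => (P.filt n).map (LinearMap.mulRight K g)) ∘ unop)).comap
        e.symm.toLinearMap := by
    refine Finset.sup_le fun g hg => ?_
    rintro _ ⟨y, hy, rfl⟩
    exact Finset.le_sup (f := (fun g => (P.filt n).map (LinearMap.mulRight K g)) ∘ unop) hg
      ⟨unop y, op_mem_op_filt.1 hy, rfl⟩
  exact hle hop

end Opposite

end PBWSystem

section RelDim

open Module

variable {K M : Type*} [Field K] [AddCommGroup M] [Module K M]

/-- The dimension of the image of `X` in `M ⧸ J`, which is meaningful if `X` has finite
dimension. -/
def relDim (J X : Submodule K M) : ℕ :=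
  finrank K (X.map J.mkQ)

theorem finrank_map_add_finrank_inf_ker {N : Type*} [AddCommGroup N] [Module K N] (φ : M →ₗ[K] N)
    (X : Submodule K M) [FiniteDimensional K X] :
    finrank K (X.map φ) + finrank K ↥(X ⊓ LinearMap.ker φ) = finrank K X := by
  rw [← LinearMap.finrank_range_add_finrank_ker (φ.domRestrict X), LinearMap.range_domRestrict,
    LinearMap.ker_domRestrict, ← Submodule.map_comap_subtype,
    (Submodule.equivSubtypeMap X _).finrank_eq]

theorem relDim_add_finrank_inf (J X : Submodule K M) [FiniteDimensional K X] :
    relDim J X + finrank K ↥(X ⊓ J) = finrank K X := by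
  have := finrank_map_add_finrank_inf_ker J.mkQ X
  rwa [Submodule.ker_mkQ] at this

theorem relDim_top (X : Submodule K M) [FiniteDimensional K X] : relDim ⊤ X = 0 := by
  have := relDim_add_finrank_inf ⊤ X
  rw [inf_top_eq] at this
  omega

theorem relDim_eq_add_relDim_inf {J J' : Submodule K M} (h : J ≤ J') (X : Submodule K M)
    [FiniteDimensional K X] : relDim J X = relDim J' X + relDim J (X ⊓ J') := by
  have h₁ := relDim_add_finrank_inf J X
  have h₂ := relDim_add_finrank_inf J' X
  have h₃ := relDim_add_finrank_inf J (X ⊓ J')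
  rw [inf_assoc, inf_eq_right.2 h] at h₃
  omega

theorem relDim_mono (J : Submodule K M) {X Y : Submodule K M} [FiniteDimensional K Y]
    (h : X ≤ Y ⊔ J) : relDim J X ≤ relDim J Y := by
  refine Submodule.finrank_mono ((Submodule.map_mono h).trans ?_)
  rw [Submodule.map_sup, Submodule.mkQ_map_self, sup_bot_eq]

theorem relDim_map_add_finrank (φ : M →ₗ[K] M) (J X : Submodule K M) [FiniteDimensional K X] :
    relDim J (X.map φ) + finrank K ↥(X ⊓ J.comap φ) = finrank K X := by
  have := finrank_map_add_finrank_inf_ker (J.mkQ ∘ₗ φ) X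
  rwa [Submodule.map_comp, LinearMap.ker_comp, Submodule.ker_mkQ] at this

theorem relDim_map_le (φ : M →ₗ[K] M) {V J : Submodule K M} (X : Submodule K M)
    [FiniteDimensional K X] (h : V ≤ J.comap φ) : relDim J (X.map φ) ≤ relDim V X := by
  have h₁ := relDim_map_add_finrank φ J X
  have h₂ := relDim_add_finrank_inf V X
  have h₃ := Submodule.finrank_mono (inf_le_inf_left X h)
  omega

theorem relDim_le_relDim_map (φ : M →ₗ[K] M) {V J X : Submodule K M} [FiniteDimensional K X]
    (h : X ⊓ J.comap φ ≤ V) : relDim V X ≤ relDim J (X.map φ) := by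
  have h₁ := relDim_map_add_finrank φ J X
  have h₂ := relDim_add_finrank_inf V X
  have h₃ := Submodule.finrank_mono (le_inf inf_le_left h)
  omega

theorem relDim_anti {J J' : Submodule K M} (h : J ≤ J') (X : Submodule K M)
    [FiniteDimensional K X] : relDim J' X ≤ relDim J X := by
  simpa using relDim_map_le LinearMap.id X h

theorem relDim_finset_sup_le {ι : Type*} (J : Submodule K M) (s : Finset ι)
    (Y : ι → Submodule K M) [∀ i, FiniteDimensional K (Y i)] :
    relDim J (s.sup Y) ≤ ∑ i ∈ s, relDim J (Y i) := by
  classical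
  induction s using Finset.induction_on with
  | empty => simp [relDim]
  | insert i s hi ih =>
    rw [Finset.sup_insert, Finset.sum_insert hi, relDim, Submodule.map_sup]
    exact (Submodule.finrank_add_le_finrank_add_finrank _ _).trans (Nat.add_le_add_left ih _)

theorem le_of_relDim_eq_zero {J X : Submodule K M} [FiniteDimensional K X]
    (h : relDim J X = 0) : X ≤ J := by
  rw [← J.ker_mkQ]
  exact LinearMap.le_ker_iff_map.2 (Submodule.finrank_eq_zero.1 h)

end RelDim

theorem mul_mem_of_mem {R : Type*} [Ring R] (J : Submodule Rᵐᵒᵖ R) {x : R} (hx : x ∈ J) (r : R) :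
    x * r ∈ J :=
  J.smul_mem (MulOpposite.op r) hx

theorem mem_span_op_singleton {R : Type*} [Ring R] {c x : R} :
    x ∈ Submodule.span Rᵐᵒᵖ {c} ↔ ∃ r, c * r = x :=
  Submodule.mem_span_singleton.trans MulOpposite.op_surjective.exists

theorem mul_mem_span_op_singleton {R : Type*} [Ring R] (c r : R) :
    c * r ∈ Submodule.span Rᵐᵒᵖ {c} :=
  mem_span_op_singleton.2 ⟨r, rfl⟩

namespace PBWSystem

open MonomialOrder (degLex)

variable {d : ℕ} {K R : Type*} [Field K] [Ring R] [Algebra K R] (P : PBWSystem d K R)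

include P in
/-- Hilbert's basis theorem for algebras with a PBW basis. -/
theorem isNoetherian : IsNoetherian Rᵐᵒᵖ R := by
  refine ⟨fun J => ?_⟩
  obtain ⟨s, hs, h⟩ := P.exists_finset_inf_filt_le_sup_mulLeft (L := J.restrictScalars K)
    fun x hx => mul_mem_of_mem J hx
  refine ⟨s, le_antisymm (Submodule.span_le.2 hs) fun x hx => ?_⟩
  obtain ⟨n, hn⟩ := P.exists_mem_filt x
  have hle : (s.sup fun g => (P.filt n).map (LinearMap.mulLeft K g)) ≤
      (Submodule.span Rᵐᵒᵖ (s : Set R)).restrictScalars K := by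
    refine Finset.sup_le fun g hg => ?_
    rintro _ ⟨y, -, rfl⟩
    exact mul_mem_of_mem _ (Submodule.subset_span hg) y
  exact hle (h n ⟨hx, hn⟩)

theorem filt_le_sup_monSpan (J : Submodule K R) (n : ℕ) :
    P.filt n ≤ J ⊔ P.monSpan {v | v ∉ P.ini J ∧ v.degree ≤ n} := by
  set Q := J ⊔ P.monSpan {v | v ∉ P.ini J ∧ v.degree ≤ n}
  suffices ⊤ ⊓ P.filt n ≤ Q by rwa [top_inf_eq] at this
  refine inf_filt_le_of_ini fun v _ hvn => ?_
  by_cases hv : v ∈ P.ini J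
  · exact ini_mono (fun x (hx : x ∈ J) =>
      show x ∈ ⊤ ⊓ Q from ⟨Submodule.mem_top, Submodule.mem_sup_left hx⟩) hv
  · have hmem : P.mon v ∈ P.monSpan {v | v ∉ P.ini J ∧ v.degree ≤ n} := mon_mem_monSpan ⟨hv, hvn⟩
    exact ⟨P.mon v, ⟨Submodule.mem_top, Submodule.mem_sup_right hmem⟩, by simp⟩

theorem linearIndepOn_mkQ_mon (J : Submodule K R) :
    LinearIndepOn K (fun v => J.mkQ (P.mon v)) (P.ini J)ᶜ := by
  rw [linearIndepOn_iff]
  intro l hl h₀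
  by_contra hne
  obtain ⟨v, hv, hmax⟩ :=
    l.support.exists_max_image degLex.toSyn (Finsupp.support_nonempty_iff.2 hne)
  have hx : Finsupp.linearCombination K P.mon l ∈ J := by
    rw [← J.ker_mkQ, LinearMap.mem_ker, Finsupp.apply_linearCombination]
    exact h₀
  refine hl hv (mem_ini_of_sub_smul_mem hx (Finsupp.mem_support_iff.1 hv) ?_)
  rw [Finsupp.linearCombination_apply, Finsupp.sum, ← Finset.add_sum_erase _ _ hv,
    add_sub_cancel_left]
  refine sum_mem fun u hu => Submodule.smul_mem _ _ (mon_mem_monSpan ?_)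
  obtain ⟨hne, hu⟩ := Finset.mem_erase.1 hu
  exact (hmax u hu).lt_of_ne (degLex.toSyn.injective.ne hne)

theorem relDim_filt (J : Submodule K R) (n : ℕ) :
    relDim J (P.filt n) = degreeCount (P.ini J)ᶜ n := by
  set s := {v | v ∉ P.ini J ∧ v.degree ≤ n}
  have hs : s.Finite := finite_mem_and_degree_le _ n
  have hmap : (P.filt n).map J.mkQ = Submodule.span K ((fun v => J.mkQ (P.mon v)) '' s) := by
    refine le_antisymm ((Submodule.map_mono (P.filt_le_sup_monSpan J n)).trans ?_) ?_
    · rw [Submodule.map_sup, Submodule.mkQ_map_self, bot_sup_eq, monSpan, Submodule.map_span,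
        ← Set.image_comp]
      rfl
    · refine Submodule.span_le.2 ?_
      rintro _ ⟨v, hv, rfl⟩
      exact Submodule.mem_map_of_mem (mon_mem_monSpan hv.2)
  have hind : LinearIndepOn K (fun v => J.mkQ (P.mon v)) s :=
    (P.linearIndepOn_mkQ_mon J).mono fun _ hv => hv.1
  rw [relDim, hmap, Set.image_eq_range]
  have := hs.fintype
  rw [finrank_span_eq_card hind, ← Nat.card_eq_fintype_card]
  rfl

/-- The Hilbert function of `R ⧸ J`. -/
def hilb (J : Submodule Rᵐᵒᵖ R) (n : ℕ) : ℕ :=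
  relDim (J.restrictScalars K) (P.filt n)

theorem hilb_eq_degreeCount (J : Submodule Rᵐᵒᵖ R) (n : ℕ) :
    P.hilb J n = degreeCount (P.ini J)ᶜ n :=
  P.relDim_filt (J.restrictScalars K) n

theorem hilb_top (n : ℕ) : P.hilb ⊤ n = 0 :=
  relDim_top (P.filt n)

variable {J J' : Submodule Rᵐᵒᵖ R}

theorem hilb_anti (h : J ≤ J') (n : ℕ) : P.hilb J' n ≤ P.hilb J n :=
  relDim_anti h _

theorem hilb_eq_add_relDim_inf (h : J ≤ J') (n : ℕ) :
    P.hilb J n = P.hilb J' n + relDim (J.restrictScalars K) (P.filt n ⊓ J'.restrictScalars K) :=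
  relDim_eq_add_relDim_inf h _

theorem hilb_eq_add_degreeCount (h : J ≤ J') (n : ℕ) :
    P.hilb J n = P.hilb J' n + degreeCount (P.ini J' \ P.ini J) n := by
  have hini : P.ini J ⊆ P.ini (J' : Set R) := ini_mono h
  rw [hilb_eq_degreeCount, hilb_eq_degreeCount, degreeCount, degreeCount, degreeCount,
    ← Set.ncard_union_eq ?_ (finite_mem_and_degree_le _ n) (finite_mem_and_degree_le _ n)]
  · congr 1
    ext v
    have := @hini v
    simp only [Set.mem_compl_iff, Set.mem_sdiff, Set.mem_union, Set.mem_ofPred_eq]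
    tauto
  · exact Set.disjoint_left.2 fun v hv hv' => hv.1 hv'.1.1

theorem eq_of_hilb_le (h : J ≤ J') (hle : ∀ n, P.hilb J n ≤ P.hilb J' n) : J = J' := by
  refine le_antisymm h fun x hx => ?_
  obtain ⟨n, hn⟩ := P.exists_mem_filt x
  have h₀ : relDim (J.restrictScalars K) (P.filt n ⊓ J'.restrictScalars K) = 0 := by
    have := P.hilb_eq_add_relDim_inf h n
    have := hle n
    omega
  exact le_of_relDim_eq_zero h₀ ⟨hn, hx⟩

/-- The Hilbert functions of `R ⧸ J` and `R ⧸ J'` agree up to growth of degree less than `b`. If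
`J ≤ J'` this says that `J' ⧸ J` has Gelfand–Kirillov dimension less than `b`, where `b = 0` means
that `J' ⧸ J` vanishes. -/
def DimLT (b : ℕ) (J J' : Submodule Rᵐᵒᵖ R) : Prop :=
  ∃ C, ∀ n, P.hilb J n ≤ P.hilb J' n + C * growth b n

variable {P} {b : ℕ}

theorem DimLT.refl (b : ℕ) (J : Submodule Rᵐᵒᵖ R) : P.DimLT b J J :=
  ⟨0, fun n => by simp⟩

theorem DimLT.trans {J'' : Submodule Rᵐᵒᵖ R} (h : P.DimLT b J J') (h' : P.DimLT b J' J'') :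
    P.DimLT b J J'' := by
  obtain ⟨C, hC⟩ := h
  obtain ⟨C', hC'⟩ := h'
  refine ⟨C + C', fun n => ?_⟩
  linarith [hC n, hC' n]

theorem DimLT.mono {I I' : Submodule Rᵐᵒᵖ R} (h : P.DimLT b J J') (hI : J ≤ I) (hI' : I' ≤ J') :
    P.DimLT b I I' := by
  obtain ⟨C, hC⟩ := h
  exact ⟨C, fun n => (P.hilb_anti hI n).trans <| (hC n).trans <| by
    gcongr
    exact P.hilb_anti hI' n⟩

theorem DimLT.eq (h : P.DimLT 0 J J') (hle : J ≤ J') : J = J' := by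
  obtain ⟨C, hC⟩ := h
  exact P.eq_of_hilb_le hle fun n => by simpa using hC n

theorem dimLT_of_growthLT (h : J ≤ J') (hG : GrowthLT b (P.ini J' \ P.ini J)) :
    P.DimLT b J J' := by
  obtain ⟨C, hC⟩ := hG
  exact ⟨C, fun n => by
    rw [P.hilb_eq_add_degreeCount h]
    gcongr
    exact hC n⟩

variable (P) in
theorem isUpperSet_ini_rightIdeal (J : Submodule Rᵐᵒᵖ R) : IsUpperSet (P.ini J) :=
  isUpperSet_ini (L := J.restrictScalars K) fun _ hx => mul_mem_of_mem J hx

theorem exists_add_hilb_le_of_not_dimLT (h : J ≤ J') (hn : ¬ P.DimLT b J J') :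
    ∃ a, ∀ n k, d * n + a ≤ k → (n + 1) ^ b + P.hilb J' k ≤ P.hilb J k := by
  obtain ⟨a, ha⟩ := (growthLT_or_growthGE b (P.isUpperSet_ini_rightIdeal J)
    (P.isUpperSet_ini_rightIdeal J')).resolve_left fun hG => hn (dimLT_of_growthLT h hG)
  refine ⟨a, fun n k hk => ?_⟩
  rw [P.hilb_eq_add_degreeCount h, add_comm]
  gcongr
  exact ha n k hk

variable (P) in
theorem dimLT_succ_bot_top : P.DimLT (d + 1) ⊥ ⊤ :=
  dimLT_of_growthLT bot_le ⟨1, fun n => by simpa using degreeCount_le _ n⟩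

theorem dimLT_top_of_nonempty_ini (h : (P.ini (J : Set R)).Nonempty) : P.DimLT d J ⊤ := by
  obtain ⟨C, hC⟩ := growthLT_compl_of_isUpperSet (P.isUpperSet_ini_rightIdeal J) h
  refine dimLT_of_growthLT le_top ⟨C, fun n => (degreeCount_mono ?_ le_rfl).trans (hC n)⟩
  exact fun v hv => hv.2

variable (P) in
theorem exists_filt_inf_sup_le (S W : Submodule Rᵐᵒᵖ R) :
    ∃ k, ∀ n, P.filt n ⊓ (S ⊔ W).restrictScalars K ≤
      P.filt (n + k) ⊓ S.restrictScalars K ⊔ W.restrictScalars K := by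
  obtain ⟨G, hG, hle⟩ := P.exists_finset_inf_filt_le_sup_mulLeft
    (L := (S ⊔ W).restrictScalars K) fun x hx => mul_mem_of_mem (S ⊔ W) hx
  choose! s hs w hw hsw using fun g (hg : g ∈ G) => Submodule.mem_sup.1 (hG hg)
  choose k hk using fun g => P.exists_mem_filt (s g)
  refine ⟨G.sup k, fun n x hx => ?_⟩
  have hmul : (G.sup fun g => (P.filt n).map (LinearMap.mulLeft K g)) ≤
      P.filt (n + G.sup k) ⊓ S.restrictScalars K ⊔ W.restrictScalars K := by
    refine Finset.sup_le fun g hg => ?_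
    rintro _ ⟨y, hy, rfl⟩
    rw [LinearMap.mulLeft_apply, ← hsw g hg, add_mul]
    refine Submodule.add_mem_sup ⟨?_, mul_mem_of_mem S (hs g hg) y⟩ (mul_mem_of_mem W (hw g hg) y)
    rw [add_comm n]
    exact mul_mem_filt (filt_mono (Finset.le_sup hg) (hk g)) hy
  exact hmul (hle n ⟨hx.2, hx.1⟩)

variable (P) in
theorem exists_hilb_le_add_relDim (S W : Submodule Rᵐᵒᵖ R) :
    ∃ k, ∀ n, P.hilb W n ≤ P.hilb (S ⊔ W) n +
      relDim (W.restrictScalars K) (P.filt (n + k) ⊓ S.restrictScalars K) := by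
  obtain ⟨k, hk⟩ := P.exists_filt_inf_sup_le S W
  refine ⟨k, fun n => ?_⟩
  rw [P.hilb_eq_add_relDim_inf (le_sup_right : W ≤ S ⊔ W)]
  gcongr
  exact relDim_mono _ (hk n)

theorem dimLT_sup_of_relDim_le {S W : Submodule Rᵐᵒᵖ R} {C : ℕ}
    (h : ∀ n, relDim (W.restrictScalars K) (P.filt n ⊓ S.restrictScalars K) ≤ C * growth b n) :
    P.DimLT b W (S ⊔ W) := by
  obtain ⟨k, hk⟩ := P.exists_hilb_le_add_relDim S W
  refine ⟨C * (k + 1) ^ (b - 1), fun n => (hk n).trans ?_⟩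
  rw [mul_assoc]
  gcongr
  exact (h _).trans (by gcongr; exact growth_add_le b n k)

theorem DimLT.sup_right {S W : Submodule Rᵐᵒᵖ R} (h : P.DimLT b (S ⊓ W) S) :
    P.DimLT b W (S ⊔ W) := by
  obtain ⟨C, hC⟩ := h
  refine dimLT_sup_of_relDim_le (C := C) fun n => ?_
  have hinf : relDim ((S ⊓ W).restrictScalars K) (P.filt n ⊓ S.restrictScalars K) ≤
      C * growth b n := by
    have := P.hilb_eq_add_relDim_inf (inf_le_left : S ⊓ W ≤ S) n
    have := hC n
    omega
  have hle : (S ⊓ W).restrictScalars K ≤ W.restrictScalars K := fun _ hx => hx.2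
  exact (relDim_anti hle _).trans hinf

theorem DimLT.of_mul_mem {V T Q : Submodule Rᵐᵒᵖ R} (h : P.DimLT b V ⊤)
    (hT : ∀ p ∈ T, ∀ r, r * p ∈ T) (hVT : ∀ v ∈ V, ∀ p ∈ T, v * p ∈ Q) :
    P.DimLT b Q (T ⊔ Q) := by
  obtain ⟨C, hC⟩ := h
  obtain ⟨s, hs, hle⟩ := P.exists_finset_inf_filt_le_sup_mulRight (L := T.restrictScalars K) hT
  refine dimLT_sup_of_relDim_le (C := s.card * C) fun n => ?_
  have hmap : ∀ g ∈ s, relDim (Q.restrictScalars K) ((P.filt n).map (LinearMap.mulRight K g)) ≤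
      C * growth b n := fun g hg => by
    have hcomap : V.restrictScalars K ≤ (Q.restrictScalars K).comap (LinearMap.mulRight K g) :=
      fun v hv => hVT v hv g (hs hg)
    refine (relDim_map_le _ _ hcomap).trans ((hC n).trans_eq ?_)
    rw [hilb_top, zero_add]
  have := Submodule.finiteDimensional_finset_sup s
    fun g => (P.filt n).map (LinearMap.mulRight K g)
  calc relDim (Q.restrictScalars K) (P.filt n ⊓ T.restrictScalars K)
      ≤ relDim (Q.restrictScalars K) (s.sup fun g => (P.filt n).map (LinearMap.mulRight K g)) :=
        relDim_mono _ ((inf_comm _ _).trans_le (hle n) |>.trans le_sup_left)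
    _ ≤ ∑ g ∈ s, relDim (Q.restrictScalars K) ((P.filt n).map (LinearMap.mulRight K g)) :=
        relDim_finset_sup_le _ _ _
    _ ≤ ∑ _g ∈ s, C * growth b n := Finset.sum_le_sum hmap
    _ = s.card * C * growth b n := by rw [Finset.sum_const, smul_eq_mul, mul_assoc]

end PBWSystem

section Telescoping

theorem add_mul_le_of_forall_lt {f : ℕ → ℕ} {n k x y T : ℕ}
    (h : ∀ i < T, f (n + i * k) + x ≤ f (n + (i + 1) * k) + y) :
    f n + T * x ≤ f (n + T * k) + T * y := by
  induction T with
  | zero => simp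
  | succ T ih =>
    have := ih fun i hi => h i (hi.trans T.lt_succ_self)
    have := h T T.lt_succ_self
    linarith

theorem not_forall_add_pow_le_of_le_growth {f : ℕ → ℕ} {b C : ℕ}
    (hf : ∀ n, f n ≤ C * growth (b + 1) n) (a c k C' : ℕ) :
    ¬ ∀ t n, c * t + a ≤ n + k → f n + (t + 1) ^ b ≤ f (n + k) + C' * growth b n := by
  intro h
  set A := c + a + k + 2
  set T := (C + C') * A ^ b + 1
  set n := (c + 1) * T + a
  set N := n + T * k
  have hsum : f n + T * (T + 1) ^ b ≤ f N + T * (C' * growth b N) := by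
    refine add_mul_le_of_forall_lt fun i hi => ?_
    have hstep := h T (n + i * k) (by simp only [n]; nlinarith [Nat.zero_le T, Nat.zero_le (i * k)])
    have hmono : growth b (n + i * k) ≤ growth b N := monotone_growth b (by simp only [N]; gcongr)
    rw [add_one_mul i k, ← add_assoc n]
    exact hstep.trans (by gcongr)
  have hT : T ≤ N + 1 := by simp only [N, n]; nlinarith [Nat.zero_le (c * T), Nat.zero_le (T * k)]
  have hgrowth : T * growth b N ≤ (N + 1) ^ b :=
    (Nat.mul_le_mul_right _ hT).trans (succ_mul_growth_le b N)
  have hN : (N + 1) ^ b ≤ A ^ b * (T + 1) ^ b := by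
    rw [← mul_pow]
    gcongr
    simp only [N, n, A]
    nlinarith [Nat.zero_le (a * T)]
  have hle : T * (T + 1) ^ b ≤ (C + C') * A ^ b * (T + 1) ^ b := by
    calc T * (T + 1) ^ b ≤ C * (N + 1) ^ b + C' * (T * growth b N) := by
          have := hf N
          rw [growth_succ] at this
          linarith
      _ ≤ (C + C') * (N + 1) ^ b := by
          rw [add_mul C C']
          exact Nat.add_le_add_left (Nat.mul_le_mul_left C' hgrowth) _
      _ ≤ (C + C') * A ^ b * (T + 1) ^ b := by
          rw [mul_assoc]
          gcongr
  exact absurd (Nat.le_of_mul_le_mul_right hle (by positivity)) (Nat.not_succ_le_self _)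

end Telescoping

section Rows

variable {A M : Type*} [Ring A] [AddCommGroup M] [Module A M]

theorem sup_span_range_add {ι : Type*} (T : Submodule A M) (u w : ι → M) (hw : ∀ i, w i ∈ T) :
    T ⊔ Submodule.span A (Set.range (u + w)) = T ⊔ Submodule.span A (Set.range u) := by
  have hle : ∀ u w : ι → M, (∀ i, w i ∈ T) →
      Submodule.span A (Set.range (u + w)) ≤ T ⊔ Submodule.span A (Set.range u) :=
    fun u w hw => Submodule.span_le.2 <| Set.range_subset_iff.2 fun i =>
      add_mem (Submodule.mem_sup_right (Submodule.subset_span ⟨i, rfl⟩))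
        (Submodule.mem_sup_left (hw i))
  refine le_antisymm (sup_le le_sup_left (hle u w hw)) (sup_le le_sup_left ?_)
  simpa using hle (u + w) (-w) fun i => neg_mem (hw i)

theorem sup_span_singleton_add (T : Submodule A M) (c : M) {t : M} (ht : t ∈ T) :
    T ⊔ Submodule.span A {c + t} = T ⊔ Submodule.span A {c} := by
  have h := sup_span_range_add T (fun _ : Unit => c) (fun _ => t) fun _ => ht
  rwa [Pi.add_def, Set.range_const, Set.range_const] at h

theorem mem_span_op_range {R ι : Type*} [Ring R] [Fintype ι] {a : ι → R} {x : R} :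
    x ∈ Submodule.span Rᵐᵒᵖ (Set.range a) ↔ ∃ t : ι → R, ∑ i, a i * t i = x := by
  rw [Submodule.mem_span_range_iff_exists_fun]
  constructor
  · rintro ⟨c, rfl⟩
    exact ⟨fun i => (c i).unop, rfl⟩
  · rintro ⟨t, rfl⟩
    exact ⟨fun i => MulOpposite.op (t i), rfl⟩

end Rows

section Residual

variable {R : Type*} [Ring R]

/-- The right ideal `{p | S p ⊆ J}`, that is, the annihilator of `S` modulo `J`. It is a two-sided
ideal since `S` is a right ideal. -/
def residualIdeal (J S : Submodule Rᵐᵒᵖ R) : Submodule Rᵐᵒᵖ R where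
  carrier := {p | ∀ s ∈ S, s * p ∈ J}
  add_mem' hp hq s hs := by
    rw [mul_add]
    exact add_mem (hp s hs) (hq s hs)
  zero_mem' s _ := by simp
  smul_mem' r p hp s hs := by
    rw [mul_smul_comm]
    exact J.smul_mem r (hp s hs)

theorem mul_mem_residualIdeal {J S : Submodule Rᵐᵒᵖ R} {p : R} (hp : p ∈ residualIdeal J S)
    (r : R) : r * p ∈ residualIdeal J S := fun s hs => by
  rw [← mul_assoc]
  exact hp _ (mul_mem_of_mem S hs r)

theorem mem_residualIdeal_of_inf_sup_span_le {J S : Submodule Rᵐᵒᵖ R} {c : R}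
    (h : ∀ s ∈ S, S ⊓ (J ⊔ Submodule.span Rᵐᵒᵖ {c + s}) ≤ J) {l : R} (hl : c * l ∈ J) :
    l ∈ residualIdeal J S := fun s hs => by
  refine h s hs ⟨mul_mem_of_mem S hs l, ?_⟩
  have hsl : s * l = (c + s) * l - c * l := by rw [add_mul, add_sub_cancel_left]
  rw [hsl]
  exact sub_mem (Submodule.mem_sup_right (mul_mem_span_op_singleton _ l))
    (Submodule.mem_sup_left hl)

end Residual

namespace PBWSystem

variable {d : ℕ} {K R : Type*} [Field K] [Ring R] [Algebra K R] {P : PBWSystem d K R} {b : ℕ}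
  {J S N : Submodule Rᵐᵒᵖ R}

/-- `S ⧸ J` is a critical module in the sense of Gelfand–Kirillov dimension. -/
theorem exists_critical (hJN : J < N) (hJ : P.DimLT (b + 1) J ⊤) :
    ∃ S, J < S ∧ S ≤ N ∧ ∀ S', J < S' → S' ≤ S → P.DimLT b S' S := by
  by_contra! hcon
  obtain ⟨C, hC⟩ := hJ
  have hchain : ∀ p : ℕ, ∃ S, J < S ∧ S ≤ N ∧
      ∃ a, ∀ n k, d * n + a ≤ k → p * (n + 1) ^ b + P.hilb N k ≤ P.hilb S k := by
    intro p
    induction p with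
    | zero => exact ⟨N, hJN, le_rfl, 0, fun n k _ => by simp⟩
    | succ p ih =>
      obtain ⟨S, hJS, hSN, a, ha⟩ := ih
      obtain ⟨S', hJS', hle, hS'⟩ := hcon S hJS hSN
      obtain ⟨a', ha'⟩ := exists_add_hilb_le_of_not_dimLT hle hS'
      refine ⟨S', hJS', hle.trans hSN, a + a', fun n k hk => ?_⟩
      linarith [ha n k (by omega), ha' n k (by omega)]
  obtain ⟨S, hJS, -, a, ha⟩ := hchain (C * (d + 1) ^ b + 1)
  have hlarge := ha a (d * a + a) le_rfl
  have hsmall := (P.hilb_anti hJS.le _).trans (hC (d * a + a))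
  have hgrowth : growth (b + 1) (d * a + a) ≤ (d + 1) ^ b * (a + 1) ^ b := by
    rw [growth_succ, ← mul_pow]
    gcongr
    linarith
  have hpos : 0 < (a + 1) ^ b := by positivity
  rw [hilb_top] at hsmall
  linarith [Nat.mul_le_mul_left C hgrowth]

theorem hilb_le_add_of_inf_le {W : Submodule Rᵐᵒᵖ R} (hJS : J ≤ S) (h : S ⊓ W ≤ J) (n : ℕ) :
    P.hilb J n ≤ P.hilb W n + P.hilb S n := by
  rw [P.hilb_eq_add_relDim_inf hJS, add_comm]
  gcongr
  refine (relDim_le_relDim_map (J := W.restrictScalars K) LinearMap.id ?_).trans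
    (relDim_mono _ ?_)
  · exact fun x hx => h ⟨hx.1.2, hx.2⟩
  · rw [Submodule.map_id]
    exact inf_le_left.trans le_sup_left

/-- Left multiplication by `c` maps `R ⧸ T` injectively to `(J + cR) ⧸ (J + cT)`. -/
theorem hilb_add_hilb_add_hilb_le {T : Submodule Rᵐᵒᵖ R} {c : R} {k : ℕ} (hc : c ∈ P.filt k)
    (hT : ∀ l, c * l ∈ J → l ∈ T) (n : ℕ) :
    P.hilb J n + P.hilb (J ⊔ Submodule.span Rᵐᵒᵖ {c}) (n + k) + P.hilb T n ≤
      P.hilb J (n + k) + P.hilb (J ⊔ T.map (DistribSMul.toLinearMap Rᵐᵒᵖ R c)) n := by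
  set W := J ⊔ Submodule.span Rᵐᵒᵖ {c}
  set Q := J ⊔ T.map (DistribSMul.toLinearMap Rᵐᵒᵖ R c)
  have hJQ : J ≤ Q := le_sup_left
  have hQW : Q ≤ W := sup_le_sup_left (by
    rintro _ ⟨p, -, rfl⟩
    exact mul_mem_span_op_singleton c p) J
  have hinj : P.hilb T n ≤
      relDim (Q.restrictScalars K) (P.filt (n + k) ⊓ W.restrictScalars K) := by
    refine (relDim_le_relDim_map (J := Q.restrictScalars K) (LinearMap.mulLeft K c) ?_).trans
      (relDim_mono _ ?_)
    · rintro x ⟨-, hx⟩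
      obtain ⟨j, hj, _, ⟨p, hp, rfl⟩, hjp⟩ := Submodule.mem_sup.1 hx
      have hxp : c * (x - p) = j := by
        rw [mul_sub, sub_eq_iff_eq_add]
        exact hjp.symm
      simpa using add_mem (hT (x - p) (hxp ▸ hj)) hp
    · refine le_sup_of_le_left ?_
      rintro _ ⟨x, hx, rfl⟩
      exact ⟨add_comm k n ▸ mul_mem_filt hc hx,
        Submodule.mem_sup_right (mul_mem_span_op_singleton c x)⟩
  have hmono : relDim (J.restrictScalars K) (P.filt n ⊓ Q.restrictScalars K) ≤
      relDim (J.restrictScalars K) (P.filt (n + k) ⊓ Q.restrictScalars K) :=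
    relDim_mono _ (le_sup_of_le_left (inf_le_inf_right _ (filt_mono (Nat.le_add_right n k))))
  have hW := P.hilb_eq_add_relDim_inf hQW (n + k)
  have hQ := P.hilb_eq_add_relDim_inf hJQ n
  have hQ' := P.hilb_eq_add_relDim_inf hJQ (n + k)
  omega

theorem exists_lt_inf_sup_span (hJS : J < S) (hJ : P.DimLT (b + 1) J ⊤)
    (hS : ¬ P.DimLT b J S) {c : R} (hc : P.DimLT b (S ⊔ Submodule.span Rᵐᵒᵖ {c}) ⊤) :
    ∃ s ∈ S, J < S ⊓ (J ⊔ Submodule.span Rᵐᵒᵖ {c + s}) := by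
  by_contra! hcon
  have hdisj : ∀ s ∈ S, S ⊓ (J ⊔ Submodule.span Rᵐᵒᵖ {c + s}) ≤ J := fun s hs =>
    ((le_inf hJS.le le_sup_left).eq_of_not_lt (hcon s hs)).ge
  set T := residualIdeal J S
  set Q := J ⊔ T.map (DistribSMul.toLinearMap Rᵐᵒᵖ R c)
  have hmul : ∀ v ∈ S ⊔ Submodule.span Rᵐᵒᵖ {c}, ∀ p ∈ T, v * p ∈ Q := by
    intro v hv p hp
    obtain ⟨s, hs, y, hy, rfl⟩ := Submodule.mem_sup.1 hv
    obtain ⟨r, rfl⟩ := mem_span_op_singleton.1 hy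
    rw [add_mul, mul_assoc]
    exact Submodule.add_mem_sup (hp s hs) ⟨r * p, mul_mem_residualIdeal hp r, rfl⟩
  obtain ⟨C', hC'⟩ := hc.of_mul_mem (T := T) (fun _ hp => mul_mem_residualIdeal hp) hmul
  obtain ⟨k, hk⟩ := P.exists_mem_filt c
  obtain ⟨a, ha⟩ := exists_add_hilb_le_of_not_dimLT hJS.le hS
  obtain ⟨C, hC⟩ := hJ
  refine not_forall_add_pow_le_of_le_growth (f := P.hilb J) (b := b) (C := C)
    (fun n => by simpa [hilb_top] using hC n) a d k C' fun t n ht => ?_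
  have hstep : P.hilb J n + P.hilb (J ⊔ Submodule.span Rᵐᵒᵖ {c}) (n + k) + P.hilb T n ≤
      P.hilb J (n + k) + P.hilb Q n :=
    P.hilb_add_hilb_add_hilb_le hk (fun _ => mem_residualIdeal_of_inf_sup_span_le hdisj) n
  have hW := P.hilb_le_add_of_inf_le hJS.le (by simpa using hdisj 0 (zero_mem S)) (n + k)
  have hTQ := (hC' n).trans (Nat.add_le_add_right (P.hilb_anti le_sup_left n) _)
  have := ha t (n + k) ht
  omega

theorem DimLT.sup_of_inf {T W : Submodule Rᵐᵒᵖ R} (hJT : J ≤ T)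
    (h : P.DimLT b (T ⊓ (J ⊔ W)) T) (hT : P.DimLT b (T ⊔ W) ⊤) : P.DimLT b (J ⊔ W) ⊤ := by
  refine h.sup_right.trans ?_
  rwa [← sup_assoc, sup_eq_left.2 hJT]

theorem exists_dimLT_sup_span_singleton (hJ : P.DimLT (b + 1) J ⊤) (c : R) (hJN : J ≤ N)
    (hc : Submodule.span Rᵐᵒᵖ {c} ⊔ N = ⊤) :
    ∃ n ∈ N, P.DimLT b (J ⊔ Submodule.span Rᵐᵒᵖ {c + n}) ⊤ := by
  have := P.isNoetherian
  induction J using WellFoundedGT.induction generalizing N with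
  | _ J ih =>
  by_cases hsat : ∃ T, J < T ∧ P.DimLT b J T
  · obtain ⟨T, hJT, hT⟩ := hsat
    obtain ⟨x, hx, h⟩ := ih T hJT (hJ.mono hJT.le le_rfl) (N := N ⊔ T) le_sup_right
      (by rw [← sup_assoc, hc, top_sup_eq])
    obtain ⟨n, hn, t, ht, rfl⟩ := Submodule.mem_sup.1 hx
    rw [← add_assoc, sup_span_singleton_add T _ ht] at h
    exact ⟨n, hn, (hT.mono (le_inf hJT.le le_sup_left) le_rfl).sup_of_inf hJT.le h⟩
  · obtain rfl | hlt := hJN.eq_or_lt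
    · refine ⟨0, zero_mem _, ?_⟩
      rw [add_zero, sup_comm, hc]
      exact DimLT.refl b ⊤
    obtain ⟨S, hJS, hSN, hcrit⟩ := exists_critical hlt hJ
    obtain ⟨n, hn, h⟩ := ih S hJS (hJ.mono hJS.le le_rfl) hSN hc
    obtain ⟨s, hs, hlt⟩ := exists_lt_inf_sup_span hJS hJ (fun hS => hsat ⟨S, hJS, hS⟩) h
    refine ⟨n + s, add_mem hn (hSN hs), ?_⟩
    rw [← sup_span_singleton_add S _ hs] at h
    rw [← add_assoc]
    exact (hcrit _ hlt inf_le_left).sup_of_inf hJS.le h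

theorem exists_dimLT_sup_span_range {s : ℕ} (hJ : P.DimLT (b + s) J ⊤) (a : Fin s → R) (e : R)
    (htop : J ⊔ Submodule.span Rᵐᵒᵖ (Set.range a) ⊔ Submodule.span Rᵐᵒᵖ {e} = ⊤) :
    ∃ r : Fin s → R,
      P.DimLT b (J ⊔ Submodule.span Rᵐᵒᵖ (Set.range fun i => a i + e * r i)) ⊤ := by
  induction s generalizing J with
  | zero => exact ⟨0, hJ.mono le_sup_left le_rfl⟩
  | succ s ih =>
    obtain ⟨a₀, a, rfl⟩ : ∃ a₀ a', a = Fin.cons a₀ a' := ⟨_, _, (Fin.cons_self_tail a).symm⟩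
    rw [Fin.range_cons, Submodule.span_insert] at htop
    set I := Submodule.span Rᵐᵒᵖ (Set.range a)
    obtain ⟨x, hx, h⟩ := exists_dimLT_sup_span_singleton (b := b + s) hJ a₀
      (N := J ⊔ (I ⊔ Submodule.span Rᵐᵒᵖ {e})) le_sup_left (by rw [← htop]; ac_rfl)
    obtain ⟨j, hj, n, hn, rfl⟩ := Submodule.mem_sup.1 hx
    rw [add_comm j, ← add_assoc, sup_span_singleton_add J _ hj] at h
    have htop' : J ⊔ Submodule.span Rᵐᵒᵖ {a₀ + n} ⊔ I ⊔ Submodule.span Rᵐᵒᵖ {e} = ⊤ := by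
      rw [sup_assoc, sup_assoc, sup_comm (Submodule.span Rᵐᵒᵖ {a₀ + n}),
        sup_span_singleton_add _ _ hn, ← htop]
      ac_rfl
    obtain ⟨r, hr⟩ := ih h a htop'
    obtain ⟨_, hy, _, hz, rfl⟩ := Submodule.mem_sup.1 hn
    obtain ⟨t, rfl⟩ := mem_span_op_range.1 hy
    obtain ⟨r₀, rfl⟩ := mem_span_op_singleton.1 hz
    let r' : Fin (s + 1) → R := Fin.cons (r₀ - ∑ i, r i * t i) r
    let L := J ⊔ Submodule.span Rᵐᵒᵖ
      (Set.range fun i => (Fin.cons a₀ a : Fin (s + 1) → R) i + e * r' i)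
    have hmem : ∀ i, (Fin.cons a₀ a : Fin (s + 1) → R) i + e * r' i ∈ L := fun i =>
      Submodule.mem_sup_right (Submodule.subset_span ⟨i, rfl⟩)
    have hmem₀ : a₀ + (∑ i, a i * t i + e * r₀) ∈ L := by
      have hsum : a₀ + (∑ i, a i * t i + e * r₀) =
          a₀ + e * (r₀ - ∑ i, r i * t i) + ∑ i, (a i + e * r i) * t i := by
        simp only [add_mul, mul_sub, Finset.sum_add_distrib, Finset.mul_sum, mul_assoc]
        abel
      rw [hsum]
      exact add_mem (hmem 0) (sum_mem fun i _ => mul_mem_of_mem L (hmem i.succ) (t i))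
    refine ⟨r', hr.mono (sup_le (sup_le le_sup_left ?_) ?_) le_rfl⟩
    · exact (Submodule.span_singleton_le_iff_mem _ _).2 hmem₀
    · exact Submodule.span_le.2 (Set.range_subset_iff.2 fun i => hmem i.succ)

end PBWSystem

section Normal

variable {R : Type*} [Ring R]

/-- A normal element `z` of a ring `R`, that is, `zR = Rz`. -/
structure IsNormalElement (z : R) : Prop where
  exists_left : ∀ a, ∃ b, SemiconjBy z a b
  exists_right : ∀ b, ∃ a, SemiconjBy z a b

namespace IsNormalElement

theorem mul {y z : R} (hy : IsNormalElement y) (hz : IsNormalElement z) :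
    IsNormalElement (y * z) where
  exists_left a := by
    obtain ⟨b, hb⟩ := hz.exists_left a
    obtain ⟨c, hc⟩ := hy.exists_left b
    exact ⟨c, hc.mul_left hb⟩
  exists_right c := by
    obtain ⟨b, hb⟩ := hy.exists_right c
    obtain ⟨a, ha⟩ := hz.exists_right b
    exact ⟨a, hb.mul_left ha⟩

theorem of_adjoin_eq_top {K : Type*} [CommRing K] [Algebra K R] {s : Set R} {z : R}
    (hs : Algebra.adjoin K s = ⊤) (hleft : ∀ a ∈ s, ∃ b, SemiconjBy z a b)
    (hright : ∀ b ∈ s, ∃ a, SemiconjBy z a b) : IsNormalElement z where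
  exists_left a := by
    have ha : a ∈ Algebra.adjoin K s := hs ▸ Algebra.mem_top
    induction ha using Algebra.adjoin_induction with
    | mem a ha => exact hleft a ha
    | algebraMap c => exact ⟨_, (Algebra.commutes c z).symm⟩
    | add a b _ _ ha hb => exact ⟨_, ha.choose_spec.add_right hb.choose_spec⟩
    | mul a b _ _ ha hb => exact ⟨_, ha.choose_spec.mul_right hb.choose_spec⟩
  exists_right b := by
    have hb : b ∈ Algebra.adjoin K s := hs ▸ Algebra.mem_top
    induction hb using Algebra.adjoin_induction with
    | mem b hb => exact hright b hb
    | algebraMap c => exact ⟨_, (Algebra.commutes c z).symm⟩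
    | add a b _ _ ha hb => exact ⟨_, ha.choose_spec.add_right hb.choose_spec⟩
    | mul a b _ _ ha hb => exact ⟨_, ha.choose_spec.mul_right hb.choose_spec⟩

variable {z : R} {J : Submodule Rᵐᵒᵖ R}

theorem mul_mem_span (hz : IsNormalElement z) (a : R) : a * z ∈ Submodule.span Rᵐᵒᵖ {z} := by
  obtain ⟨b, hb⟩ := hz.exists_right a
  exact hb.eq ▸ mul_mem_span_op_singleton z b

theorem exists_sub_mul_mem (hz : IsNormalElement z) (h : J ⊔ Submodule.span Rᵐᵒᵖ {z} = ⊤) (x : R) :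
    ∃ b, x - b * z ∈ J := by
  obtain ⟨j, hj, _, ht, rfl⟩ := Submodule.mem_sup.1 (h ▸ Submodule.mem_top : x ∈ J ⊔ _)
  obtain ⟨a, rfl⟩ := mem_span_op_singleton.1 ht
  obtain ⟨b, hb⟩ := hz.exists_left a
  refine ⟨b, ?_⟩
  rwa [hb.eq, add_sub_cancel_right]

theorem sup_span_mul_eq_top (hz : IsNormalElement z) (h : J ⊔ Submodule.span Rᵐᵒᵖ {z} = ⊤) {e : R}
    (he : J ⊔ Submodule.span Rᵐᵒᵖ {e} = ⊤) : J ⊔ Submodule.span Rᵐᵒᵖ {e * z} = ⊤ := by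
  refine eq_top_iff.2 fun x _ => ?_
  obtain ⟨b, hb⟩ := hz.exists_sub_mul_mem h x
  obtain ⟨j, hj, _, ht, rfl⟩ := Submodule.mem_sup.1 (he ▸ Submodule.mem_top : b ∈ J ⊔ _)
  obtain ⟨s, rfl⟩ := mem_span_op_singleton.1 ht
  obtain ⟨t, ht⟩ := hz.exists_right s
  have hx : x = (x - (j + e * s) * z + j * z) + e * z * t := by
    rw [mul_assoc e z, ht.eq]
    noncomm_ring
  rw [hx]
  exact Submodule.add_mem_sup (add_mem hb (mul_mem_of_mem J hj z)) (mul_mem_span_op_singleton _ t)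

end IsNormalElement

end Normal

theorem span_range_castSucc_sup_span_last {A M : Type*} [Ring A] [AddCommGroup M] [Module A M]
    {n : ℕ} (u : Fin (n + 1) → M) :
    Submodule.span A (Set.range fun i : Fin n => u i.castSucc) ⊔
      Submodule.span A {u (Fin.last n)} = Submodule.span A (Set.range u) := by
  rw [← Submodule.span_union]
  congr 1
  ext x
  simp [Fin.exists_fin_succ', or_comm, eq_comm]

namespace PBWSystem

variable {d : ℕ} {K : Type*} [Field K]

theorem finiteDimensional_of_dimLT_one {R : Type*} [Ring R] [Algebra K R] {P : PBWSystem d K R}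
    {J : Submodule Rᵐᵒᵖ R} (h : P.DimLT 1 J ⊤) : FiniteDimensional K (R ⧸ J) := by
  obtain ⟨C, hC⟩ := h
  have hbdd : BddAbove (Set.range (P.hilb J)) :=
    ⟨C, Set.forall_mem_range.2 fun n => by simpa [hilb_top] using hC n⟩
  obtain ⟨N, hN⟩ := Nat.sSup_mem (Set.range_nonempty (P.hilb J)) hbdd
  have hmax : ∀ n, P.hilb J n ≤ P.hilb J N := fun n => hN ▸ le_csSup hbdd ⟨n, rfl⟩
  have hmap : (P.filt N).map (J.restrictScalars K).mkQ = ⊤ := by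
    refine eq_top_iff.2 fun y _ => ?_
    obtain ⟨x, rfl⟩ := Submodule.mkQ_surjective _ y
    obtain ⟨n, hn⟩ := P.exists_mem_filt x
    rw [Submodule.eq_of_le_of_finrank_le
      (Submodule.map_mono (P.filt_mono (Nat.le_add_right N n))) (hmax (N + n))]
    exact Submodule.mem_map_of_mem (filt_mono (Nat.le_add_left n N) hn)
  have := Module.Finite.map (P.filt N) (J.restrictScalars K).mkQ
  exact Module.finite_def.2 (hmap ▸ Module.Finite.iff_fg.1 this)

/-- First make the row unimodular modulo `z`, using that `R ⧸ zR` has smaller dimension than `R`;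
then add multiples of `e * z`, where `e` is the last entry, so that the row generates a right ideal
of finite codimension while remaining unimodular modulo `z`. -/
theorem isStableRow_of_isNormalElement {R : Type} [Ring R] [Algebra K R] (P : PBWSystem d K R)
    {z : R} (hz : IsNormalElement z) (hdim : P.DimLT d (Submodule.span Rᵐᵒᵖ {z}) ⊤)
    (htop : ∀ J : Submodule Rᵐᵒᵖ R, FiniteDimensional K (R ⧸ J) →
      J ⊔ Submodule.span Rᵐᵒᵖ {z} = ⊤ → J = ⊤)
    {u : Fin (d + 1) → R} (hu : IsUnimodularRow u) : IsStableRow u := by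
  set a : Fin d → R := fun i => u i.castSucc
  set e := u (Fin.last d)
  have hae : Submodule.span Rᵐᵒᵖ (Set.range a) ⊔ Submodule.span Rᵐᵒᵖ {e} = ⊤ :=
    (span_range_castSucc_sup_span_last u).trans hu
  obtain ⟨s, hs⟩ := exists_dimLT_sup_span_range (b := 0) (s := d)
    (J := Submodule.span Rᵐᵒᵖ {z}) (by rwa [zero_add]) a e
    (by rw [sup_assoc, hae, sup_top_eq])
  set a' : Fin d → R := fun i => a i + e * s i
  have hz' : Submodule.span Rᵐᵒᵖ {z} ⊔ Submodule.span Rᵐᵒᵖ (Set.range a') = ⊤ := hs.eq le_top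
  have he' : Submodule.span Rᵐᵒᵖ {e} ⊔ Submodule.span Rᵐᵒᵖ (Set.range a') = ⊤ := by
    rw [← hae, sup_comm _ (Submodule.span Rᵐᵒᵖ {e})]
    exact sup_span_range_add _ a _ fun i => mul_mem_span_op_singleton e (s i)
  rw [sup_comm] at hz' he'
  obtain ⟨t, ht⟩ := exists_dimLT_sup_span_range (b := 1) (s := d) (J := ⊥)
    (by rw [add_comm]; exact P.dimLT_succ_bot_top) a' (e * z)
    (by rw [bot_sup_eq, hz.sup_span_mul_eq_top hz' he'])
  rw [bot_sup_eq] at ht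
  refine ⟨fun i => s i + z * t i, ?_⟩
  have hrow : (fun i => a i + e * (s i + z * t i)) = fun i => a' i + e * z * t i := by
    funext i
    simp only [a', mul_add, mul_assoc, add_assoc]
  rw [IsUnimodularRow, hrow]
  refine htop _ (finiteDimensional_of_dimLT_one ht) ?_
  rw [← hz', sup_comm, sup_comm _ (Submodule.span Rᵐᵒᵖ {z})]
  exact sup_span_range_add _ a' _ fun i => mul_mem_of_mem _ (hz.mul_mem_span e) (t i)

end PBWSystem

open Module in
/-- A `q`-commuting operator `S` acts as `1` on `ker D ≠ 0`, and the powers of `U` would move such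
a vector into infinitely many eigenspaces of `S`. -/
theorem subsingleton_of_qCommuting_end {K M : Type*} [Field K] [AddCommGroup M] [Module K M]
    [FiniteDimensional K M] {q : K} (hq₀ : q ≠ 0) (hq : ∀ n : ℕ, 0 < n → q ^ n ≠ 1)
    {D U S : End K M} (hS : IsUnit S) (hDS : D * S = q • (S * D)) (hSU : S * U = q • (U * S))
    (hD : ∀ m, D m = 0 → S m = m) (hDU : ∀ m, D (U m) = 0 → q • S m = m) : Subsingleton M := by
  by_contra hM
  rw [not_subsingleton_iff_nontrivial] at hM
  have hker : LinearMap.ker D ≠ ⊥ := fun h => by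
    have hdet := congrArg LinearMap.det hDS
    rw [LinearMap.det_smul, map_mul, map_mul, mul_comm (LinearMap.det D)] at hdet
    have hdet₀ := (LinearMap.isUnit_det _
      (hS.mul ((LinearMap.isUnit_iff_ker_eq_bot D).2 h))).ne_zero
    rw [map_mul] at hdet₀
    exact hq _ finrank_pos (mul_eq_right₀ hdet₀ |>.1 hdet.symm)
  obtain ⟨m, hm, hm₀⟩ := Submodule.exists_mem_ne_zero_of_ne_bot hker
  have heig : ∀ k : ℕ, S ((U ^ k) m) = q ^ k • (U ^ k) m := fun k => by
    induction k with
    | zero => simpa using hD m hm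
    | succ k ih =>
      rw [pow_succ' U, End.mul_apply, ← End.mul_apply S, hSU, LinearMap.smul_apply, End.mul_apply,
        ih, map_smul, smul_smul, ← pow_succ']
  have hne : ∀ k : ℕ, (U ^ k) m ≠ 0 := fun k => by
    induction k with
    | zero => exact hm₀
    | succ k ih =>
      intro h
      rw [pow_succ', End.mul_apply] at h
      have hfix := hDU ((U ^ k) m) (by rw [h, map_zero])
      rw [heig, smul_smul, ← pow_succ'] at hfix
      exact hq (k + 1) k.succ_pos (smul_left_injective K ih (hfix.trans (one_smul K _).symm))
  have hinj : Function.Injective fun k : ℕ => q ^ k :=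
    Units.val_injective.comp <|
      (injective_pow_iff_not_isOfFinOrder (x := Units.mk0 q hq₀)).2 fun h => by
        obtain ⟨n, hn, h⟩ := isOfFinOrder_iff_pow_eq_one.1 h
        exact hq n hn (by simpa using congrArg Units.val h)
  have := (End.eigenvectors_linearIndependent' S _ hinj _
    fun k => ⟨End.mem_eigenspace_iff.2 (heig k), hne k⟩).finite
  exact not_finite ℕ

section QCommutator

variable {K A : Type*} [Field K] [Ring A] [Algebra K A]

theorem pow_mul_eq_smul_mul_pow {a b : A} {q : K} (h : a * b = q • (b * a)) (n : ℕ) :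
    a ^ n * b = q ^ n • (b * a ^ n) := by
  induction n with
  | zero => simp
  | succ n ih =>
    rw [pow_succ', mul_assoc, ih, mul_smul_comm, ← mul_assoc, h, smul_mul_assoc, smul_smul,
      ← pow_succ, mul_assoc]

/-- The `c`-commutator `DU - c UD`. -/
def qCommutator (c : K) (D U : A) : A :=
  D * U - c • (U * D)

theorem mul_eq_smul_mul_add_qCommutator (c : K) (D U : A) :
    D * U = c • (U * D) + qCommutator c D U :=
  (add_sub_cancel _ _).symm

/-- The defining relations of the down-up algebra `A(lam + μ, -lam * μ, 0)`. -/
structure DownUpRelations (lam μ : K) (D U : A) : Prop where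
  down_down_up : D * D * U = (lam + μ) • (D * U * D) + -(lam * μ) • (U * D * D)
  down_up_up : D * U * U = (lam + μ) • (U * D * U) + -(lam * μ) • (U * U * D)

namespace DownUpRelations

variable {lam μ : K} {D U : A} (h : DownUpRelations lam μ D U)

include h

protected theorem symm : DownUpRelations μ lam D U where
  down_down_up := by rw [add_comm μ, mul_comm μ, h.down_down_up]
  down_up_up := by rw [add_comm μ, mul_comm μ, h.down_up_up]

protected theorem op : DownUpRelations lam μ (MulOpposite.op U) (MulOpposite.op D) where
  down_down_up := by
    apply MulOpposite.unop_injective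
    simpa [mul_assoc] using h.down_up_up
  down_up_up := by
    apply MulOpposite.unop_injective
    simpa [mul_assoc] using h.down_down_up

protected theorem map {B : Type*} [Ring B] [Algebra K B] (φ : A →ₐ[K] B) :
    DownUpRelations lam μ (φ D) (φ U) where
  down_down_up := by simpa using congrArg φ h.down_down_up
  down_up_up := by simpa using congrArg φ h.down_up_up

theorem down_mul_qCommutator :
    D * qCommutator lam D U = μ • (qCommutator lam D U * D) := by
  rw [qCommutator, mul_sub, sub_mul, mul_smul_comm, smul_mul_assoc, ← mul_assoc, ← mul_assoc,
    h.down_down_up]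
  module

theorem qCommutator_mul_up :
    qCommutator lam D U * U = μ • (U * qCommutator lam D U) := by
  rw [qCommutator, mul_sub, sub_mul, mul_smul_comm, smul_mul_assoc, ← mul_assoc, ← mul_assoc,
    h.down_up_up]
  module

theorem exists_down_pow_succ_mul_up (k : ℕ) : ∃ c : K, D ^ (k + 1) * U =
    lam ^ (k + 1) • (U * D ^ (k + 1)) + c • (qCommutator lam D U * D ^ k) := by
  induction k with
  | zero => exact ⟨1, by simp [← mul_eq_smul_mul_add_qCommutator]⟩
  | succ k ih =>
    obtain ⟨c, hc⟩ := ih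
    refine ⟨lam ^ (k + 1) + c * μ, ?_⟩
    rw [pow_succ' D (k + 1), mul_assoc, hc, mul_add, mul_smul_comm, mul_smul_comm, ← mul_assoc,
      ← mul_assoc, h.down_mul_qCommutator, mul_eq_smul_mul_add_qCommutator lam D U]
    simp only [add_mul, smul_mul_assoc, mul_assoc, ← pow_succ']
    module

theorem isNormalElement_qCommutator (hμ : μ ≠ 0) (hgen : Algebra.adjoin K {D, U} = ⊤) :
    IsNormalElement (qCommutator lam D U) := by
  have hD : SemiconjBy (qCommutator lam D U) (μ • D) D := by
    rw [SemiconjBy, h.down_mul_qCommutator, mul_smul_comm]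
  have hU : SemiconjBy (qCommutator lam D U) U (μ • U) := by
    rw [SemiconjBy, h.qCommutator_mul_up, smul_mul_assoc]
  have hD' : SemiconjBy (qCommutator lam D U) D (μ⁻¹ • D) := by
    rw [SemiconjBy, smul_mul_assoc, h.down_mul_qCommutator, inv_smul_smul₀ hμ]
  have hU' : SemiconjBy (qCommutator lam D U) (μ⁻¹ • U) U := by
    rw [SemiconjBy, mul_smul_comm, h.qCommutator_mul_up, inv_smul_smul₀ hμ]
  refine .of_adjoin_eq_top hgen ?_ ?_
  · rintro _ (rfl | rfl)
    exacts [⟨_, hD'⟩, ⟨_, hU⟩]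
  · rintro _ (rfl | rfl)
    exacts [⟨_, hD⟩, ⟨_, hU'⟩]

end DownUpRelations

variable (lam : K) (D U : A)

/-- The monomials `Uⁱ xʲ Dᵏ` in `U`, the `lam`-commutator `x` of `D` and `U`, and `D`. -/
def downUpMon (v : Fin 3 →₀ ℕ) : A :=
  U ^ v 0 * qCommutator lam D U ^ v 1 * D ^ v 2

/-- The generators `U`, `x`, `D` of the monomials `Uⁱ xʲ Dᵏ`. -/
def downUpGen : Fin 3 → A :=
  ![U, qCommutator lam D U, D]

theorem downUpMon_zero : downUpMon lam D U 0 = 1 := by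
  simp [downUpMon]

theorem isLeading_downUpMon_mul_down (v : Fin 3 →₀ ℕ) :
    IsLeading K (downUpMon lam D U) (v + Finsupp.single 2 1) (downUpMon lam D U v * D) := by
  have hmul : downUpMon lam D U v * D = downUpMon lam D U (v + Finsupp.single 2 1) := by
    simp [downUpMon, mul_assoc, pow_succ]
  exact hmul ▸ isLeading_mon (v + Finsupp.single 2 1)

variable {lam D U} in
theorem adjoin_range_downUpGen (hgen : Algebra.adjoin K {D, U} = ⊤) :
    Algebra.adjoin K (Set.range (downUpGen lam D U)) = ⊤ := by
  refine eq_top_iff.2 (hgen ▸ Algebra.adjoin_mono ?_)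
  rintro _ (rfl | rfl)
  exacts [⟨2, rfl⟩, ⟨0, rfl⟩]

namespace DownUpRelations

variable {lam μ : K} {D U : A} (h : DownUpRelations lam μ D U)

include h

theorem isLeading_downUpMon_mul_up (hlam : lam ≠ 0) (hμ : μ ≠ 0) (v : Fin 3 →₀ ℕ) :
    IsLeading K (downUpMon lam D U) (v + Finsupp.single 0 1) (downUpMon lam D U v * U) := by
  have hxU := pow_mul_eq_smul_mul_pow h.qCommutator_mul_up (v 1)
  obtain hv | hv := eq_or_ne (v 2) 0
  · refine ⟨μ ^ v 1, pow_ne_zero _ hμ, ?_⟩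
    have hmul : downUpMon lam D U v * U =
        μ ^ v 1 • downUpMon lam D U (v + Finsupp.single 0 1) := by
      simp [downUpMon, hv, mul_assoc, hxU, pow_succ]
    rw [hmul, sub_self]
    exact zero_mem _
  obtain ⟨w, rfl⟩ : ∃ w, v = w + Finsupp.single 2 1 :=
    ⟨v - Finsupp.single 2 1, (tsub_add_cancel_of_le <| by
      simpa [Finsupp.single_le_iff, Nat.one_le_iff_ne_zero] using hv).symm⟩
  obtain ⟨c, hc⟩ := h.exists_down_pow_succ_mul_up (w 2)
  refine ⟨lam ^ (w 2 + 1) * μ ^ w 1, mul_ne_zero (pow_ne_zero _ hlam) (pow_ne_zero _ hμ), ?_⟩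
  have hmul : downUpMon lam D U (w + Finsupp.single 2 1) * U =
      (lam ^ (w 2 + 1) * μ ^ w 1) • downUpMon lam D U (w + Finsupp.single 2 1 + Finsupp.single 0 1)
        + c • downUpMon lam D U (w + Finsupp.single 1 1) := by
    have hxU' := pow_mul_eq_smul_mul_pow h.qCommutator_mul_up (w 1)
    simp only [downUpMon, Finsupp.add_apply, Finsupp.single_apply, Fin.isValue, Fin.reduceEq,
      if_true, if_false, add_zero]
    rw [mul_assoc, hc, mul_add, mul_smul_comm, mul_smul_comm, ← mul_assoc, mul_assoc (U ^ w 0),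
      hxU', mul_smul_comm, smul_mul_assoc, smul_smul, pow_succ U, pow_succ (qCommutator lam D U)]
    simp only [mul_assoc]
  rw [hmul, add_sub_cancel_left]
  refine Submodule.smul_mem _ _ (mon_mem_spanDegreeLT ?_)
  simp

theorem isLeading_downUpMon_mul_qCommutator (hμ : μ ≠ 0) (v : Fin 3 →₀ ℕ) :
    IsLeading K (downUpMon lam D U) (v + Finsupp.single 1 1)
      (downUpMon lam D U v * qCommutator lam D U) := by
  refine ⟨μ ^ v 2, pow_ne_zero _ hμ, ?_⟩
  have hmul : downUpMon lam D U v * qCommutator lam D U =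
      μ ^ v 2 • downUpMon lam D U (v + Finsupp.single 1 1) := by
    simp [downUpMon, mul_assoc, pow_mul_eq_smul_mul_pow h.down_mul_qCommutator, pow_succ]
  rw [hmul, sub_self]
  exact zero_mem _

theorem isLeading_downUpMon_mul_downUpGen (hlam : lam ≠ 0) (hμ : μ ≠ 0) (v : Fin 3 →₀ ℕ) :
    ∀ i, IsLeading K (downUpMon lam D U) (v + Finsupp.single i 1)
      (downUpMon lam D U v * downUpGen lam D U i)
  | 0 => h.isLeading_downUpMon_mul_up hlam hμ v
  | 1 => h.isLeading_downUpMon_mul_qCommutator hμ v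
  | 2 => isLeading_downUpMon_mul_down lam D U v

/-- The PBW system formed by the monomials `Uⁱ xʲ Dᵏ`. -/
def pbwSystem (hlam : lam ≠ 0) (hμ : μ ≠ 0) (hgen : Algebra.adjoin K {D, U} = ⊤) :
    PBWSystem 3 K A where
  mon := downUpMon lam D U
  mon_mul_mon := isLeading_mon_mul_mon (downUpMon_zero lam D U)
    (h.isLeading_downUpMon_mul_downUpGen hlam hμ)
  span_range_mon := span_range_mon_eq_top (downUpMon_zero lam D U)
    (h.isLeading_downUpMon_mul_downUpGen hlam hμ) (adjoin_range_downUpGen hgen)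

theorem isNormalElement_qCommutator_mul_qCommutator (hlam : lam ≠ 0) (hμ : μ ≠ 0)
    (hgen : Algebra.adjoin K {D, U} = ⊤) :
    IsNormalElement (qCommutator lam D U * qCommutator μ D U) :=
  (h.isNormalElement_qCommutator hμ hgen).mul (h.symm.isNormalElement_qCommutator hlam hgen)

theorem qCommutator_mul_qCommutator_eq :
    qCommutator lam D U * qCommutator μ D U =
      qCommutator lam D U ^ 2 + ((lam - μ) * μ) • (U * qCommutator lam D U * D) := by
  have hy : qCommutator μ D U = qCommutator lam D U + (lam - μ) • (U * D) := by
    simp only [qCommutator]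
    module
  rw [hy, mul_add, mul_smul_comm, ← mul_assoc, h.qCommutator_mul_up, smul_mul_assoc, smul_smul, sq]

/-- With respect to the degree lexicographic order the leading monomial of `xy` is `U x D`. -/
theorem dimLT_span_qCommutator_mul_qCommutator (hlam : lam ≠ 0) (hμ : μ ≠ 0) (hne : lam ≠ μ)
    (hgen : Algebra.adjoin K {D, U} = ⊤) :
    (h.pbwSystem hlam hμ hgen).DimLT 3
      (Submodule.span Aᵐᵒᵖ {qCommutator lam D U * qCommutator μ D U}) ⊤ := by
  set P := h.pbwSystem hlam hμ hgen
  have hlead : qCommutator lam D U * qCommutator μ D U -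
      ((lam - μ) * μ) • P.mon (Finsupp.equivFunOnFinite.symm 1) =
        P.mon (Finsupp.single 1 2) := by
    simp [P, pbwSystem, downUpMon, h.qCommutator_mul_qCommutator_eq]
  refine PBWSystem.dimLT_top_of_nonempty_ini ⟨Finsupp.equivFunOnFinite.symm 1, ?_⟩
  refine P.mem_ini_of_sub_smul_mem
    (L := (Submodule.span Aᵐᵒᵖ {qCommutator lam D U * qCommutator μ D U}).restrictScalars K)
    (Submodule.mem_span_singleton_self _)
    (mul_ne_zero (sub_ne_zero.2 hne) hμ) ?_
  rw [hlead]
  refine PBWSystem.mon_mem_monSpan (PBWSystem.degLex_lt_of_degree_lt ?_)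
  simp [Finsupp.degree_eq_sum]

end DownUpRelations

end QCommutator

section Representations

variable {K A : Type*} [Field K] [Ring A] [Algebra K A]

open Module MulOpposite

theorem qCommutator_op_op (c : K) (D U : A) :
    qCommutator c (op U) (op D) = op (qCommutator c D U) := by
  simp [qCommutator]

theorem map_qCommutator {B : Type*} [Ring B] [Algebra K B] (φ : A →ₐ[K] B) (c : K) (D U : A) :
    φ (qCommutator c D U) = qCommutator c (φ D) (φ U) := by
  simp [qCommutator]

theorem IsNormalElement.isUnit_lsmul_op {z : A} (hz : IsNormalElement z) {J : Submodule Aᵐᵒᵖ A}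
    [FiniteDimensional K (A ⧸ J)] (h : J ⊔ Submodule.span Aᵐᵒᵖ {z} = ⊤) :
    IsUnit (Algebra.lsmul K K (A ⧸ J) (op z)) := by
  refine (LinearMap.isUnit_iff_range_eq_top _).2 (LinearMap.range_eq_top.2 fun m => ?_)
  obtain ⟨a, rfl⟩ := Submodule.Quotient.mk_surjective J m
  obtain ⟨b, hb⟩ := hz.exists_sub_mul_mem h a
  exact ⟨Submodule.Quotient.mk b, ((Submodule.Quotient.eq J).2 hb).symm⟩

namespace DownUpRelations

variable {lam μ : K}

theorem mul_up_of_qCommutator_mul_eq {D U S : A} (h : DownUpRelations lam μ D U) (hμ : μ ≠ 0)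
    (hx : IsUnit (qCommutator lam D U)) (hS : qCommutator lam D U * S = qCommutator μ D U) :
    S * U = (lam / μ) • (U * S) := by
  refine hx.mul_left_cancel ?_
  calc qCommutator lam D U * (S * U) = lam • (U * qCommutator μ D U) := by
        rw [← mul_assoc, hS, h.symm.qCommutator_mul_up]
    _ = qCommutator lam D U * ((lam / μ) • (U * S)) := by
        rw [mul_smul_comm, ← mul_assoc, h.qCommutator_mul_up, smul_mul_assoc, mul_assoc, hS,
          smul_smul, div_mul_cancel₀ _ hμ]

theorem down_mul_of_qCommutator_mul_eq {D U S : A} (h : DownUpRelations lam μ D U) (hμ : μ ≠ 0)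
    (hx : IsUnit (qCommutator lam D U)) (hS : qCommutator lam D U * S = qCommutator μ D U) :
    D * S = (lam / μ) • (S * D) := by
  refine hx.mul_left_cancel (smul_right_injective A hμ ?_)
  calc μ • (qCommutator lam D U * (D * S)) = D * qCommutator μ D U := by
        rw [← mul_assoc, ← smul_mul_assoc, ← h.down_mul_qCommutator, mul_assoc, hS]
    _ = μ • (qCommutator lam D U * ((lam / μ) • (S * D))) := by
        rw [h.symm.down_mul_qCommutator, mul_smul_comm, ← mul_assoc, hS, smul_smul,
          mul_div_cancel₀ _ hμ]

/-- The operator `S = x⁻¹y` commutes with `D` and `U` up to the scalar `lam / μ`. -/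
theorem subsingleton_of_isUnit {M : Type*} [AddCommGroup M] [Module K M] [FiniteDimensional K M]
    {D U : End K M} (h : DownUpRelations lam μ D U) (hlam : lam ≠ 0) (hμ : μ ≠ 0)
    (hru : ∀ n : ℕ, 0 < n → (lam / μ) ^ n ≠ 1) (hx : IsUnit (qCommutator lam D U))
    (hy : IsUnit (qCommutator μ D U)) : Subsingleton M := by
  obtain ⟨x, hx'⟩ := id hx
  set S : End K M := ↑x⁻¹ * qCommutator μ D U
  have hS : qCommutator lam D U * S = qCommutator μ D U := by rw [← hx', x.mul_inv_cancel_left]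
  have hSx : ∀ m, S m = (↑x⁻¹ : End K M) (qCommutator μ D U m) := fun _ => rfl
  have hxx : ∀ m, (↑x⁻¹ : End K M) (qCommutator lam D U m) = m := fun m => by
    rw [← hx', ← End.mul_apply, x.inv_mul, End.one_apply]
  have hcomm : ∀ (c : K) m, qCommutator c D U m = D (U m) - c • U (D m) := fun _ _ => rfl
  refine subsingleton_of_qCommuting_end (div_ne_zero hlam hμ) hru (x⁻¹.isUnit.mul hy)
    (h.down_mul_of_qCommutator_mul_eq hμ hx hS) (h.mul_up_of_qCommutator_mul_eq hμ hx hS)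
    (fun m hm => ?_) fun m hm => ?_
  · have hxy : qCommutator μ D U m = qCommutator lam D U m := by
      rw [hcomm, hcomm, hm, map_zero, smul_zero, smul_zero]
    rw [hSx, hxy, hxx]
  · have hxy : (lam / μ) • qCommutator μ D U m = qCommutator lam D U m := by
      rw [hcomm, hcomm, hm, zero_sub, zero_sub, smul_neg, smul_smul, div_mul_cancel₀ _ hμ]
    rw [hSx, ← map_smul, hxy, hxx]

variable {D U : A} (h : DownUpRelations lam μ D U)

include h

theorem eq_top_of_sup_span_eq_top (hlam : lam ≠ 0) (hμ : μ ≠ 0)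
    (hru : ∀ n : ℕ, 0 < n → (lam / μ) ^ n ≠ 1) (hgen : Algebra.adjoin K {D, U} = ⊤)
    {J : Submodule Aᵐᵒᵖ A} [FiniteDimensional K (A ⧸ J)]
    (hJ : J ⊔ Submodule.span Aᵐᵒᵖ {qCommutator lam D U * qCommutator μ D U} = ⊤) : J = ⊤ := by
  have hx := h.isNormalElement_qCommutator hμ hgen
  have hy := h.symm.isNormalElement_qCommutator hlam hgen
  have hsup : ∀ z : A, qCommutator lam D U * qCommutator μ D U ∈ Submodule.span Aᵐᵒᵖ {z} →
      J ⊔ Submodule.span Aᵐᵒᵖ {z} = ⊤ := fun z hz =>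
    eq_top_iff.2 (hJ ▸ sup_le_sup_left (Submodule.span_singleton_le_iff_mem _ _ |>.2 hz) J)
  let ρ : Aᵐᵒᵖ →ₐ[K] End K (A ⧸ J) := Algebra.lsmul K K (A ⧸ J)
  have hunit : ∀ {c : K}, IsUnit (ρ (op (qCommutator c D U))) →
      IsUnit (qCommutator c (ρ (op U)) (ρ (op D))) := fun h => by
    rwa [← map_qCommutator, qCommutator_op_op]
  refine Submodule.Quotient.subsingleton_iff.1 ?_
  exact (h.op.map ρ).subsingleton_of_isUnit hlam hμ hru
    (hunit (hx.isUnit_lsmul_op (hsup _ (mul_mem_span_op_singleton _ _))))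
    (hunit (hy.isUnit_lsmul_op (hsup _ (hy.mul_mem_span _))))

end DownUpRelations

theorem DownUpRelations.isStableRow {A : Type} [Ring A] [Algebra K A] {lam μ : K} {D U : A}
    (h : DownUpRelations lam μ D U) (hlam : lam ≠ 0) (hμ : μ ≠ 0)
    (hru : ∀ n : ℕ, 0 < n → (lam / μ) ^ n ≠ 1) (hgen : Algebra.adjoin K {D, U} = ⊤)
    {u : Fin 4 → A} (hu : IsUnimodularRow u) : IsStableRow u := by
  have hne : lam ≠ μ := fun hne => hru 1 one_pos (by rw [hne, div_self hμ, one_pow])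
  exact (h.pbwSystem hlam hμ hgen).isStableRow_of_isNormalElement
    (h.isNormalElement_qCommutator_mul_qCommutator hlam hμ hgen)
    (h.dimLT_span_qCommutator_mul_qCommutator hlam hμ hne hgen)
    (fun _ _ => h.eq_top_of_sup_span_eq_top hlam hμ hru hgen) hu

end Representations

namespace DownUp

variable {K : Type} [Field K] {α β : K}

theorem downUpRelations {lam μ : K} (hsum : lam + μ = α) (hprod : lam * μ = -β) :
    DownUpRelations lam μ (D K α β 0) (U K α β 0) where
  down_down_up := by
    have h := RingQuot.mkAlgHom_rel K (DownUpRel.rel2 (K := K) (a := α) (b := β) (g := 0))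
    simp only [map_add, map_mul, map_smul, zero_smul, add_zero] at h
    rw [hsum, hprod, neg_neg]
    exact h
  down_up_up := by
    have h := RingQuot.mkAlgHom_rel K (DownUpRel.rel1 (K := K) (a := α) (b := β) (g := 0))
    simp only [map_add, map_mul, map_smul, zero_smul, add_zero] at h
    rw [hsum, hprod, neg_neg]
    exact h

theorem adjoin_down_up_eq_top (γ : K) : Algebra.adjoin K {D K α β γ, U K α β γ} = ⊤ := by
  have h := congrArg (Subalgebra.map (RingQuot.mkAlgHom K (DownUpRel K α β γ)))
    (FreeAlgebra.adjoin_range_ι K (Fin 2))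
  rw [Algebra.map_top, (AlgHom.range_eq_top _).2 (RingQuot.mkAlgHom_surjective K _),
    AlgHom.map_adjoin, ← Set.range_comp] at h
  rw [← h]
  congr 1
  ext
  simp [Fin.exists_fin_two, D, U, eq_comm]

variable (α β) in
/-- The character `D ↦ X`, `U ↦ 0`. -/
def toPolynomial : DownUp K α β 0 →ₐ[K] Polynomial K :=
  RingQuot.liftAlgHom K ⟨FreeAlgebra.lift K ![Polynomial.X, 0], by rintro _ _ (_ | _) <;> simp⟩

theorem toPolynomial_D : toPolynomial α β (D K α β 0) = Polynomial.X := by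
  simp [toPolynomial, D, RingQuot.liftAlgHom_mkAlgHom_apply]

end DownUp

section LowerBound

theorem isUnimodularRow_iff {R : Type} [Ring R] {s : ℕ} {u : Fin s → R} :
    IsUnimodularRow u ↔ ∃ c : Fin s → R, ∑ i, u i * c i = 1 := by
  rw [← mem_span_op_range, IsUnimodularRow]
  refine ⟨fun h => h ▸ Submodule.mem_top, fun h => eq_top_iff.2 fun x _ => ?_⟩
  simpa using mul_mem_of_mem _ h x

theorem not_isStableRow_one {R : Type} [Ring R] [Nontrivial R] :
    ¬ IsStableRow fun _ : Fin 1 => (1 : R) := by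
  rintro ⟨r, hr⟩
  obtain ⟨c, hc⟩ := isUnimodularRow_iff.1 hr
  simp at hc

theorem isUnimodularRow_sq_sub_one {R : Type} [Ring R] (a : R) :
    IsUnimodularRow ![a, a ^ 2 - 1] :=
  isUnimodularRow_iff.2 ⟨![a, -1], by simp [sq]⟩

open Polynomial in
theorem not_isUnit_X_add_X_sq_sub_one_mul {K : Type*} [Field K] (r : K[X]) :
    ¬ IsUnit (X + (X ^ 2 - 1) * r) := by
  intro hu
  have hdeg : (X ^ 2 - 1 : K[X]).natDegree = 2 := natDegree_X_pow_sub_C (r := (1 : K))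
  have hdeg₀ := natDegree_eq_zero_of_isUnit hu
  obtain rfl | hr := eq_or_ne r 0
  · simp at hdeg₀
  have hmul : ((X ^ 2 - 1) * r : K[X]).natDegree = 2 + r.natDegree := by
    rw [natDegree_mul (ne_zero_of_natDegree_gt (hdeg ▸ two_pos)) hr, hdeg]
  rw [natDegree_add_eq_right_of_natDegree_lt (by rw [hmul, natDegree_X]; omega), hmul] at hdeg₀
  omega

open Polynomial in
theorem not_isStableRow_of_map_eq_X {K : Type*} {R : Type} [Field K] [Ring R] (φ : R →+* K[X])
    {a : R} (ha : φ a = X) : ¬ IsStableRow ![a, a ^ 2 - 1] := by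
  rintro ⟨r, hr⟩
  obtain ⟨c, hc⟩ := isUnimodularRow_iff.1 hr
  have hφ : (X + (X ^ 2 - 1) * φ (r 0)) * φ (c 0) = 1 := by
    simpa [ha] using congrArg φ hc
  exact not_isUnit_X_add_X_sq_sub_one_mul _ (IsUnit.of_mul_eq_one _ hφ)

end LowerBound

theorem downUp_stableRank_distinct_roots_general
    (K : Type) [Field K] (α β lam μ : K) (hβ : β ≠ 0)
    (hsum : lam + μ = α) (hprod : lam * μ = -β)
    (hru : ∀ n : ℕ, 0 < n → (lam / μ) ^ n ≠ 1) :
    2 ≤ stableRank (DownUp K α β 0) ∧ stableRank (DownUp K α β 0) ≤ 3 := by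
  obtain ⟨hlam, hμ⟩ := mul_ne_zero_iff.1 (hprod ▸ neg_ne_zero.2 hβ)
  have hthree : 3 ∈ {t : ℕ | ∀ u : Fin (t + 1) → DownUp K α β 0,
      IsUnimodularRow u → IsStableRow u} := fun _ =>
    (DownUp.downUpRelations hsum hprod).isStableRow hlam hμ hru
      (DownUp.adjoin_down_up_eq_top 0)
  refine ⟨?_, Nat.sInf_le hthree⟩
  have hmem : ∀ u : Fin (stableRank (DownUp K α β 0) + 1) → DownUp K α β 0,
      IsUnimodularRow u → IsStableRow u := Nat.sInf_mem ⟨3, hthree⟩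
  have : Nontrivial (DownUp K α β 0) := (DownUp.toPolynomial α β).toRingHom.domain_nontrivial
  by_contra! hlt
  interval_cases stableRank (DownUp K α β 0)
  · exact not_isStableRow_one (hmem _ (isUnimodularRow_iff.2 ⟨1, by simp⟩))
  · exact not_isStableRow_of_map_eq_X (DownUp.toPolynomial α β).toRingHom DownUp.toPolynomial_D
      (hmem _ (isUnimodularRow_sq_sub_one _))

/-- Let `K` be algebraically closed of characteristic zero and
`A = A(α,β,0)` with `β ≠ 0` and `α + β ≠ 1`. If `t² − αt − β = (t − λ)(t − μ)` with
`λ ≠ μ` and `λ/μ` not a root of unity, then `2 ≤ sr(A) ≤ 3`. -/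
theorem downUp_stableRank_distinct_roots
    (K : Type) [Field K] [IsAlgClosed K] [CharZero K] (α β lam μ : K)
    (hβ : β ≠ 0) (h1 : α + β ≠ 1)
    (hsum : lam + μ = α) (hprod : lam * μ = -β) (hne : lam ≠ μ)
    (hru : ∀ n : ℕ, 0 < n → (lam / μ) ^ n ≠ 1) :
    2 ≤ stableRank (DownUp K α β 0) ∧ stableRank (DownUp K α β 0) ≤ 3 := by
  exact downUp_stableRank_distinct_roots_general K α β lam μ hβ hsum hprod hru
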